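/- (Proposition 3) There exists λ > 0 such that the vector π'_∞ on 𝒮 defined by: π'_∞(A,u,v) = 0 if (A,u,v) ∉ ℛ; = λ if (A,u,v) ∈ ℛ and u = v; = 2λ/3 if (A,u,v) ∈ ℛ, u and v adjacent, d_u(A) = d_v(A) = 3; = λ/9 if (A,u,v) ∈ ℛ, u and v adjacent, uv ∉ A, d_u(A) = d_v(A) = 1; = 2λ/9 if (A,u,v) ∈ ℛ, u and v adjacent, uv ∈ A, d_u(A) = d_v(A) = 1; = 2λ/9 if (A,u,v) ∈ ℛ, u ≠ v, u and v not adjacent, d_u(A) + d_v(A) = 2; = λ/3 if (A,u,v) ∈ ℛ, u ≠ v, u and v not adjacent, d_u(A) + d_v(A) = 4; = λ/2 if (A,u,v) ∈ ℛ, u ≠ v, u and v not adjacent, d_u(A) + d_v(A) = 6; is a probability distribution satisfying π'_∞ P'_∞ = π'_∞, and moreover π'_∞ is the unique stationary probability distribution of P'_∞. -/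

import Mathlib

attribute [local instance] Classical.propDecidable

namespace FPL

/-- Vertices of the brick-wall honeycomb lattice with periodic boundary conditions. -/
abbrev Vtx (m n : ℕ) := ZMod m × ZMod n

/-- Adjacency on the brick-wall honeycomb lattice: horizontal edges between `(i,j)` and
`(i+1,j)`, and vertical edges between `(i,j)` and `(i,j+1)` whenever `i+j` is even. -/
def HoneyAdj (m n : ℕ) (x y : Vtx m n) : Prop :=
  (x.2 = y.2 ∧ (y.1 = x.1 + 1 ∨ x.1 = y.1 + 1)) ∨
  (x.1 = y.1 ∧ ((y.2 = x.2 + 1 ∧ Even (x.1.val + x.2.val)) ∨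
                (x.2 = y.2 + 1 ∧ Even (y.1.val + y.2.val))))

variable (m n : ℕ) [NeZero m] [NeZero n]

/-- The edge set of the brick-wall honeycomb lattice. -/
noncomputable def honeyEdges : Finset (Sym2 (Vtx m n)) :=
  Finset.image (fun p : Vtx m n × Vtx m n => s(p.1, p.2))
    (Finset.univ.filter fun p => HoneyAdj m n p.1 p.2)

/-- `bdeg m n A x` is the degree of the vertex `x` in the spanning subgraph `(V, A)`. -/
noncomputable def bdeg (A : Finset (Sym2 (Vtx m n))) (x : Vtx m n) : ℕ :=
  (A.filter fun e => x ∈ e).card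

/-- `(A,u,v)` is a state of the worm chain: `A ⊆ E`, and the set of odd-degree vertices of
`(V,A)` is `{u,v}` if `u ≠ v`, and is empty if `u = v`. -/
def IsWormState (A : Finset (Sym2 (Vtx m n))) (u v : Vtx m n) : Prop :=
  A ⊆ honeyEdges m n ∧ ∀ x, (Odd (bdeg m n A x) ↔ ((x = u ∨ x = v) ∧ u ≠ v))

/-- The worm state space `𝒮`. -/
abbrev WormState := {p : Finset (Sym2 (Vtx m n)) × Vtx m n × Vtx m n //
  IsWormState m n p.1 p.2.1 p.2.2}

/-- The set `ℛ` of states with no isolated vertices. -/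
def FullSupport (st : WormState m n) : Prop := ∀ x : Vtx m n, bdeg m n st.1.1 x ≠ 0

/-- The fully-packed worm transition matrix `P'_∞`. -/
noncomputable def Pinf : Matrix (WormState m n) (WormState m n) ℝ := fun st tt =>
  if st.1.2.1 = st.1.2.2 then
    (if tt = st then (bdeg m n st.1.1 st.1.2.2 : ℝ) / 3 else 0) +
    (if ∃ v' : Vtx m n, HoneyAdj m n st.1.2.2 v' ∧ s(st.1.2.2, v') ∉ st.1.1 ∧
        tt.1.1 = insert s(st.1.2.2, v') st.1.1 ∧
        ((tt.1.2.1 = v' ∧ tt.1.2.2 = st.1.2.2) ∨ (tt.1.2.1 = st.1.2.2 ∧ tt.1.2.2 = v'))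
      then 1/6 else 0)
  else
    (if bdeg m n st.1.1 st.1.2.1 = 3 ∧ ∃ u' : Vtx m n, HoneyAdj m n st.1.2.1 u' ∧
        s(st.1.2.1, u') ∈ st.1.1 ∧ tt.1.1 = st.1.1.erase s(st.1.2.1, u') ∧
        tt.1.2.1 = u' ∧ tt.1.2.2 = st.1.2.2 then 1/6 else 0) +
    (if bdeg m n st.1.1 st.1.2.1 = 1 ∧ ∃ u' : Vtx m n, HoneyAdj m n st.1.2.1 u' ∧
        s(st.1.2.1, u') ∉ st.1.1 ∧ tt.1.1 = insert s(st.1.2.1, u') st.1.1 ∧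
        tt.1.2.1 = u' ∧ tt.1.2.2 = st.1.2.2 then 1/4 else 0) +
    (if bdeg m n st.1.1 st.1.2.2 = 3 ∧ ∃ v' : Vtx m n, HoneyAdj m n st.1.2.2 v' ∧
        s(st.1.2.2, v') ∈ st.1.1 ∧ tt.1.1 = st.1.1.erase s(st.1.2.2, v') ∧
        tt.1.2.1 = st.1.2.1 ∧ tt.1.2.2 = v' then 1/6 else 0) +
    (if bdeg m n st.1.1 st.1.2.2 = 1 ∧ ∃ v' : Vtx m n, HoneyAdj m n st.1.2.2 v' ∧
        s(st.1.2.2, v') ∉ st.1.1 ∧ tt.1.1 = insert s(st.1.2.2, v') st.1.1 ∧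
        tt.1.2.1 = st.1.2.1 ∧ tt.1.2.2 = v' then 1/4 else 0)

/-- `st → tt`: some power of `P'_∞` has positive `(st,tt)` entry. -/
def Reaches (st tt : WormState m n) : Prop := ∃ k : ℕ, 0 < (Pinf m n ^ k) st tt

/-- `st ↔ tt`: mutual reachability. -/
def Comm (st tt : WormState m n) : Prop := Reaches m n st tt ∧ Reaches m n tt st

/-- The fully-packed configuration consisting of all horizontal edges. -/
noncomputable def Hconfig : Finset (Sym2 (Vtx m n)) :=
  Finset.image (fun p : Vtx m n => s(p, (p.1 + 1, p.2))) Finset.univ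

noncomputable def piInf (m n : ℕ) [NeZero m] [NeZero n] (lam : ℝ) (st : WormState m n) : ℝ :=
  if ¬ FullSupport m n st then 0
  else if st.1.2.1 = st.1.2.2 then lam
  else if HoneyAdj m n st.1.2.1 st.1.2.2 then
    if bdeg m n st.1.1 st.1.2.1 = 3 ∧ bdeg m n st.1.1 st.1.2.2 = 3 then 2 * lam / 3
    else if s(st.1.2.1, st.1.2.2) ∉ st.1.1 ∧ bdeg m n st.1.1 st.1.2.1 = 1 ∧
        bdeg m n st.1.1 st.1.2.2 = 1 then lam / 9
    else if s(st.1.2.1, st.1.2.2) ∈ st.1.1 ∧ bdeg m n st.1.1 st.1.2.1 = 1 ∧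
        bdeg m n st.1.1 st.1.2.2 = 1 then 2 * lam / 9
    else 0
  else
    if bdeg m n st.1.1 st.1.2.1 + bdeg m n st.1.1 st.1.2.2 = 2 then 2 * lam / 9
    else if bdeg m n st.1.1 st.1.2.1 + bdeg m n st.1.1 st.1.2.2 = 4 then lam / 3
    else if bdeg m n st.1.1 st.1.2.1 + bdeg m n st.1.1 st.1.2.2 = 6 then lam / 2
    else 0

set_option linter.unusedSectionVars false

section Helpers
variable {m n}

structure Good (m n : ℕ) : Prop where
  hm : Even m
  hn : Even n
  hm4 : 4 ≤ m
  hn4 : 4 ≤ n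

/-- Two-colouring of the lattice. -/
noncomputable def par (x : Vtx m n) : ZMod 2 := (x.1.val : ZMod 2) + (x.2.val : ZMod 2)

lemma val_add_one_par {k : ℕ} [NeZero k] (hk : Even k) (i : ZMod k) :
    (((i + 1).val : ℕ) : ZMod 2) = (i.val : ZMod 2) + 1 := by
  have hd : 2 ∣ k := hk.two_dvd
  have h : ∀ j : ZMod k, ((j.val : ℕ) : ZMod 2) = ZMod.castHom hd (ZMod 2) j := by
    intro j
    rw [ZMod.castHom_apply, ZMod.natCast_val]
  rw [h, h, map_add, map_one]

lemma even_iff_par (x : Vtx m n) : Even (x.1.val + x.2.val) ↔ par x = 0 := by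
  unfold par
  rw [← Nat.cast_add, ZMod.natCast_eq_zero_iff_even]

lemma par_right (hg : Good m n) (i : ZMod m) (j : ZMod n) :
    par ((i + 1, j) : Vtx m n) = par ((i, j) : Vtx m n) + 1 := by
  unfold par; simp only [val_add_one_par hg.hm]; ring

lemma par_up (hg : Good m n) (i : ZMod m) (j : ZMod n) :
    par ((i, j + 1) : Vtx m n) = par ((i, j) : Vtx m n) + 1 := by
  unfold par; simp only [val_add_one_par hg.hn]; ring

lemma z2 (a : ZMod 2) : a = 0 ∨ a = 1 := by
  revert a; decide

lemma z2' (a : ZMod 2) : a + 1 + 1 = a := by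
  revert a; decide

lemma z2ne (a : ZMod 2) : a + 1 ≠ a := by
  revert a; decide

lemma adj_symm {x y : Vtx m n} (h : HoneyAdj m n x y) : HoneyAdj m n y x := by
  unfold HoneyAdj at *
  rcases h with ⟨h1, h2⟩ | ⟨h1, h2⟩
  · exact Or.inl ⟨h1.symm, h2.symm⟩
  · exact Or.inr ⟨h1.symm, h2.symm⟩

lemma adj_par (hg : Good m n) {x y : Vtx m n} (h : HoneyAdj m n x y) : par y = par x + 1 := by
  obtain ⟨a, b⟩ := x
  obtain ⟨c, d⟩ := y
  unfold HoneyAdj at h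
  simp only at h
  rcases h with ⟨rfl, rfl | rfl⟩ | ⟨rfl, ⟨rfl, _⟩ | ⟨rfl, _⟩⟩
  · exact par_right hg _ _
  · rw [par_right hg, z2']
  · exact par_up hg _ _
  · rw [par_up hg, z2']

lemma adj_ne (hg : Good m n) {x y : Vtx m n} (h : HoneyAdj m n x y) : x ≠ y := by
  rintro rfl
  exact z2ne _ (adj_par hg h).symm

/-- Neighbours. -/
noncomputable def Nb (x : Vtx m n) : Finset (Vtx m n) := Finset.univ.filter (HoneyAdj m n x)

lemma mem_Nb {x y : Vtx m n} : y ∈ Nb x ↔ HoneyAdj m n x y := by simp [Nb]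

noncomputable def vert (x : Vtx m n) : Vtx m n :=
  if par x = 0 then (x.1, x.2 + 1) else (x.1, x.2 - 1)

lemma one_ne_neg {k : ℕ} (hk : 4 ≤ k) (i : ZMod k) : i + 1 ≠ i - 1 := by
  intro h
  have h2 : ((2 : ℕ) : ZMod k) = 0 := by
    push_cast; linear_combination h
  rw [ZMod.natCast_eq_zero_iff] at h2
  have := Nat.le_of_dvd (by norm_num) h2
  omega

lemma ne_add_one {k : ℕ} (hk : 4 ≤ k) (i : ZMod k) : i + 1 ≠ i := by
  intro h
  have h2 : ((1 : ℕ) : ZMod k) = 0 := by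
    push_cast; linear_combination h
  rw [ZMod.natCast_eq_zero_iff] at h2
  have := Nat.le_of_dvd (by norm_num) h2
  omega

lemma ne_sub_one {k : ℕ} (hk : 4 ≤ k) (i : ZMod k) : i - 1 ≠ i := by
  intro h
  exact ne_add_one hk i (by linear_combination -h)

lemma Nb_eq (hg : Good m n) (x : Vtx m n) :
    Nb x = {(x.1 + 1, x.2), (x.1 - 1, x.2), vert x} := by
  ext y
  rw [mem_Nb]
  obtain ⟨a, b⟩ := x
  obtain ⟨c, d⟩ := y
  have key : a = c → b = d + 1 → (par ((c, d) : Vtx m n) = 0 ↔ ¬ par ((a, b) : Vtx m n) = 0) := by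
    rintro rfl rfl
    rw [par_up hg]
    rcases z2 (par ((a, d) : Vtx m n)) with h | h <;> rw [h] <;> decide
  have e1 : a = c + 1 ↔ c = a - 1 := ⟨fun h => by rw [h]; ring, fun h => by rw [h]; ring⟩
  have e2 : b = d + 1 ↔ d = b - 1 := ⟨fun h => by rw [h]; ring, fun h => by rw [h]; ring⟩
  unfold HoneyAdj vert
  have p1 := even_iff_par ((a, b) : Vtx m n)
  have p2 := even_iff_par ((c, d) : Vtx m n)
  simp only at p1 p2
  simp only [p1, p2, Finset.mem_insert, Finset.mem_singleton, Prod.mk.injEq, e1]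
  rw [e2] at key ⊢
  have e3 : (a = c) = (c = a) := propext eq_comm
  have e4 : (b = d) = (d = b) := propext eq_comm
  rw [e3] at key
  split_ifs with h
  · simp only [Prod.mk.injEq, e3, e4, h, true_iff, not_true, iff_false] at key ⊢
    generalize (c = a) = q1 at *
    generalize (d = b) = q2 at *
    generalize (c = a + 1) = q3 at *
    generalize (c = a - 1) = q4 at *
    generalize (d = b + 1) = q5 at *
    generalize (d = b - 1) = q6 at *
    generalize (par ((c, d) : Vtx m n) = 0) = q7 at *
    clear e3 e4 p1 p2 e1 e2 hg
    tauto
  · simp only [Prod.mk.injEq, e3, e4, h, not_false_iff, iff_true] at key ⊢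
    generalize (c = a) = q1 at *
    generalize (d = b) = q2 at *
    generalize (c = a + 1) = q3 at *
    generalize (c = a - 1) = q4 at *
    generalize (d = b + 1) = q5 at *
    generalize (d = b - 1) = q6 at *
    generalize (par ((c, d) : Vtx m n) = 0) = q7 at *
    clear e3 e4 p1 p2 e1 e2 hg
    tauto

lemma vert_ne1 (hg : Good m n) (x : Vtx m n) : (x.1 + 1, x.2) ≠ vert x := by
  unfold vert; split_ifs <;> simp [ne_add_one hg.hm4]

lemma vert_ne2 (hg : Good m n) (x : Vtx m n) : (x.1 - 1, x.2) ≠ vert x := by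
  unfold vert
  have := ne_sub_one hg.hm4 x.1
  split_ifs <;> simp [this]

lemma Nb_card (hg : Good m n) (x : Vtx m n) : (Nb x).card = 3 := by
  rw [Nb_eq hg, Finset.card_eq_three]
  refine ⟨_, _, _, ?_, vert_ne1 hg x, vert_ne2 hg x, rfl⟩
  simp [one_ne_neg hg.hm4]

lemma mem_edges {x y : Vtx m n} : s(x, y) ∈ honeyEdges m n ↔ HoneyAdj m n x y := by
  unfold honeyEdges
  simp only [Finset.mem_image, Finset.mem_filter, Finset.mem_univ, true_and]
  constructor
  · rintro ⟨⟨a, b⟩, h, e⟩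
    rcases Sym2.eq_iff.1 e with ⟨rfl, rfl⟩ | ⟨rfl, rfl⟩
    · exact h
    · exact adj_symm h
  · intro h; exact ⟨(x, y), h, rfl⟩

lemma bdeg_eq {A : Finset (Sym2 (Vtx m n))} (hA : A ⊆ honeyEdges m n) (x : Vtx m n) :
    bdeg m n A x = ((Nb x).filter fun z => s(x, z) ∈ A).card := by
  unfold bdeg
  rw [← Finset.card_image_of_injective _ (f := fun z => s(x, z))
    (fun a b h => Sym2.congr_right.1 h)]
  congr 1
  ext e
  simp only [Finset.mem_filter, Finset.mem_image, mem_Nb]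
  constructor
  · rintro ⟨he, z, rfl⟩
    exact ⟨z, ⟨mem_edges.1 (hA he), he⟩, rfl⟩
  · rintro ⟨z, ⟨_, h⟩, rfl⟩
    exact ⟨h, by simp⟩

lemma bdeg_add {A : Finset (Sym2 (Vtx m n))} (hg : Good m n) (hA : A ⊆ honeyEdges m n) (x : Vtx m n) :
    bdeg m n A x + ((Nb x).filter fun z => s(x, z) ∉ A).card = 3 := by
  rw [bdeg_eq hA, Finset.card_filter_add_card_filter_not, Nb_card hg]

lemma bdeg_insert {A : Finset (Sym2 (Vtx m n))} {a b : Vtx m n} (h : s(a, b) ∉ A) (x : Vtx m n) :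
    bdeg m n (insert s(a, b) A) x = bdeg m n A x + if x = a ∨ x = b then 1 else 0 := by
  unfold bdeg
  rw [Finset.filter_insert]
  simp only [Sym2.mem_iff]
  split_ifs with h1
  · rw [Finset.card_insert_of_notMem]
    simp [h]
  · rfl

lemma bdeg_erase {A : Finset (Sym2 (Vtx m n))} {a b : Vtx m n} (h : s(a, b) ∈ A) (x : Vtx m n) :
    bdeg m n (A.erase s(a, b)) x + (if x = a ∨ x = b then 1 else 0) = bdeg m n A x := by
  have := bdeg_insert (A := A.erase s(a, b)) (Finset.notMem_erase _ _) x
  rw [Finset.insert_erase h] at this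
  exact this.symm

/-- Toggle an edge. -/
noncomputable def tog (A : Finset (Sym2 (Vtx m n))) (e : Sym2 (Vtx m n)) : Finset (Sym2 (Vtx m n)) :=
  if e ∈ A then A.erase e else insert e A

lemma tog_of_mem {A : Finset (Sym2 (Vtx m n))} {e : Sym2 (Vtx m n)} (h : e ∈ A) :
    tog A e = A.erase e := if_pos h
lemma tog_of_notMem {A : Finset (Sym2 (Vtx m n))} {e : Sym2 (Vtx m n)} (h : e ∉ A) :
    tog A e = insert e A := if_neg h

lemma mem_tog {A : Finset (Sym2 (Vtx m n))} {e f : Sym2 (Vtx m n)} :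
    f ∈ tog A e ↔ (f = e ∧ e ∉ A) ∨ (f ≠ e ∧ f ∈ A) := by
  unfold tog
  split_ifs with h
  · simp only [Finset.mem_erase]; tauto
  · simp only [Finset.mem_insert]
    constructor
    · rintro (rfl | h1)
      · tauto
      · right; exact ⟨fun h2 => h (h2 ▸ h1), h1⟩
    · tauto

lemma tog_tog (A : Finset (Sym2 (Vtx m n))) (e : Sym2 (Vtx m n)) : tog (tog A e) e = A := by
  ext f
  simp only [mem_tog]
  by_cases h : f = e
  · subst h; tauto
  · tauto

lemma tog_valid (hg : Good m n) {A : Finset (Sym2 (Vtx m n))} {u v w : Vtx m n}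
    (h : IsWormState m n A u v) (hw : HoneyAdj m n u w) :
    IsWormState m n (tog A s(u, w)) w v := by
  obtain ⟨hA, hd⟩ := h
  have huw := adj_ne hg hw
  refine ⟨?_, fun x => ?_⟩
  · unfold tog
    split_ifs with h
    · exact (Finset.erase_subset _ _).trans hA
    · exact Finset.insert_subset (mem_edges.2 hw) hA
  · have hp : Odd (bdeg m n (tog A s(u, w)) x) ↔
        Xor (Odd (bdeg m n A x)) (x = u ∨ x = w) := by
      by_cases h : s(u, w) ∈ A
      · rw [tog_of_mem h]
        have := bdeg_erase h x
        rw [← this]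
        split_ifs with h1
        · simp only [h1, Nat.odd_add_one, Xor, Nat.not_odd_iff_even, not_true, and_false, true_and, false_or, Nat.not_even_iff_odd]
        · simp [h1, Xor]
      · rw [tog_of_notMem h, bdeg_insert h]
        split_ifs with h1
        · simp only [h1, Nat.odd_add_one, Xor, Nat.not_odd_iff_even, not_true, and_false, true_and, false_or]
        · simp [h1, Xor]
    rw [hp, hd x]
    unfold Xor
    by_cases h1 : x = u <;> by_cases h2 : x = v <;> by_cases h3 : x = w <;> by_cases h4 : u = v <;> 
      by_cases h5 : w = v <;> simp_all

lemma valid_swap {A : Finset (Sym2 (Vtx m n))} {u v : Vtx m n}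
    (h : IsWormState m n A u v) : IsWormState m n A v u := by
  refine ⟨h.1, fun x => ?_⟩
  rw [h.2 x, or_comm, ne_comm]

lemma tog_valid' (hg : Good m n) {A : Finset (Sym2 (Vtx m n))} {u v w : Vtx m n}
    (h : IsWormState m n A u v) (hw : HoneyAdj m n v w) :
    IsWormState m n (tog A s(v, w)) u w :=
  valid_swap (tog_valid hg (valid_swap h) hw)

lemma mem_H {x y : Vtx m n} : s(x, y) ∈ Hconfig m n ↔
    (y = (x.1 + 1, x.2) ∨ x = (y.1 + 1, y.2)) := by
  unfold Hconfig
  simp only [Finset.mem_image, Finset.mem_univ, true_and]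
  constructor
  · rintro ⟨p, e⟩
    rcases Sym2.eq_iff.1 e with ⟨rfl, rfl⟩ | ⟨rfl, rfl⟩
    · exact Or.inl rfl
    · exact Or.inr rfl
  · rintro (rfl | rfl)
    · exact ⟨x, rfl⟩
    · exact ⟨y, Sym2.eq_swap⟩

lemma H_sub : Hconfig m n ⊆ honeyEdges m n := by
  intro e
  induction e using Sym2.ind with
  | _ x y =>
    rw [mem_H, mem_edges]
    rintro (rfl | rfl)
    · exact Or.inl ⟨rfl, Or.inl rfl⟩
    · exact Or.inl ⟨rfl, Or.inr rfl⟩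

lemma H_notMem (hg : Good m n) (x : Vtx m n) : s(x, vert x) ∉ Hconfig m n := by
  rw [mem_H]
  rintro (h | h)
  · exact vert_ne1 hg x h.symm
  · apply vert_ne2 hg x
    have h1 : x.1 = (vert x).1 + 1 := congrArg Prod.fst h
    have h2 : x.2 = (vert x).2 := (Prod.ext_iff.1 h).2
    ext
    · simp [h1]
    · exact h2

lemma H_mem (hg : Good m n) {x z : Vtx m n} (h : HoneyAdj m n x z) (hz : z ≠ vert x) :
    s(x, z) ∈ Hconfig m n := by
  rw [← mem_Nb, Nb_eq hg] at h
  simp only [Finset.mem_insert, Finset.mem_singleton] at h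
  rw [mem_H]
  rcases h with h | h | h
  · exact Or.inl h
  · right; rw [h]; ext <;> simp
  · exact absurd h hz

lemma vert_adj (hg : Good m n) (x : Vtx m n) : HoneyAdj m n x (vert x) := by
  rw [← mem_Nb, Nb_eq hg]; simp

lemma bdeg_H (hg : Good m n) (x : Vtx m n) : bdeg m n (Hconfig m n) x = 2 := by
  have h := bdeg_add hg (H_sub (m := m) (n := n)) x
  have : ((Nb x).filter fun z => s(x, z) ∉ Hconfig m n) = {vert x} := by
    ext z
    simp only [Finset.mem_filter, mem_Nb, Finset.mem_singleton]
    constructor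
    · rintro ⟨h1, h2⟩
      by_contra h3
      exact h2 (H_mem hg h1 h3)
    · rintro rfl
      exact ⟨vert_adj hg x, H_notMem hg x⟩
  rw [this] at h
  simp at h
  exact h

lemma conn (hg : Good m n) (x y : Vtx m n) : Relation.ReflTransGen (HoneyAdj m n) x y := by
  have hsymm : ∀ {a b : Vtx m n}, Relation.ReflTransGen (HoneyAdj m n) a b →
      Relation.ReflTransGen (HoneyAdj m n) b a := by
    intro a b h
    induction h with
    | refl => exact .refl
    | tail _ h2 ih => exact Relation.ReflTransGen.head (adj_symm h2) ih
  have hr : ∀ (i : ZMod m) (j : ZMod n),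
      Relation.ReflTransGen (HoneyAdj m n) (i, j) (i + 1, j) :=
    fun i j => .single (Or.inl ⟨rfl, Or.inl rfl⟩)
  have hup : ∀ (i : ZMod m) (j : ZMod n),
      Relation.ReflTransGen (HoneyAdj m n) (i, j) (i, j + 1) := by
    intro i j
    by_cases h : par ((i, j) : Vtx m n) = 0
    · exact .single (Or.inr ⟨rfl, Or.inl ⟨rfl, (even_iff_par ((i, j) : Vtx m n)).2 h⟩⟩)
    · have h' : par ((i + 1, j) : Vtx m n) = 0 := by
        rw [par_right hg]
        rcases z2 (par ((i, j) : Vtx m n)) with h1 | h1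
        · exact absurd h1 h
        · rw [h1]; decide
      have h3 : HoneyAdj m n (i + 1, j) (i + 1, j + 1) :=
        Or.inr ⟨rfl, Or.inl ⟨rfl, (even_iff_par ((i + 1, j) : Vtx m n)).2 h'⟩⟩
      exact (hr i j).trans ((Relation.ReflTransGen.single h3).trans (hsymm (hr i (j + 1))))
  have h0 : ∀ z : Vtx m n, Relation.ReflTransGen (HoneyAdj m n) (0, 0) z := by
    rintro ⟨i, j⟩
    have a1 : ∀ k : ℕ, Relation.ReflTransGen (HoneyAdj m n) (0, 0) ((k : ZMod m), 0) := by
      intro k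
      induction k with
      | zero => simpa using Relation.ReflTransGen.refl
      | succ k ih => push_cast; exact ih.trans (hr _ _)
    have a2 : ∀ k : ℕ, Relation.ReflTransGen (HoneyAdj m n) (i, 0) (i, (k : ZMod n)) := by
      intro k
      induction k with
      | zero => simpa using Relation.ReflTransGen.refl
      | succ k ih => push_cast; exact ih.trans (hup _ _)
    have b1 := a1 i.val
    have b2 := a2 j.val
    rw [ZMod.natCast_zmod_val] at b1 b2
    exact b1.trans b2
  exact (hsymm (h0 x)).trans (h0 y)

noncomputable def sg (x : Vtx m n) : ℤ := if par x = 0 then 1 else -1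

lemma sg_adj (hg : Good m n) {x y : Vtx m n} (h : HoneyAdj m n x y) : sg y = - sg x := by
  unfold sg
  rw [adj_par hg h]
  rcases z2 (par x) with h | h <;> rw [h] <;> decide

lemma sg_cases (x : Vtx m n) : sg x = 1 ∨ sg x = -1 := by
  unfold sg; split_ifs <;> simp

lemma sum_sg (hg : Good m n) : ∑ x : Vtx m n, sg x = 0 := by
  have h := Equiv.sum_comp (Equiv.addRight ((1, 0) : Vtx m n)) (fun x => sg x)
  have h2 : ∀ x : Vtx m n, sg ((Equiv.addRight ((1, 0) : Vtx m n)) x) = - sg x := by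
    rintro ⟨i, j⟩
    apply sg_adj hg
    left
    simp
  rw [Finset.sum_congr rfl (fun x _ => h2 x), Finset.sum_neg_distrib] at h
  linarith

lemma sum_sg_bdeg (hg : Good m n) {A : Finset (Sym2 (Vtx m n))} (hA : A ⊆ honeyEdges m n) :
    ∑ x : Vtx m n, sg x * (bdeg m n A x : ℤ) = 0 := by
  have h1 : ∀ x : Vtx m n, sg x * (bdeg m n A x : ℤ) = ∑ e ∈ A, if x ∈ e then sg x else 0 := by
    intro x
    unfold bdeg
    rw [← Finset.sum_filter, Finset.sum_const, nsmul_eq_mul, mul_comm]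
  simp only [h1]
  rw [Finset.sum_comm]
  apply Finset.sum_eq_zero
  intro e he
  induction e using Sym2.ind with
  | _ a b =>
    have hab := mem_edges.1 (hA he)
    have hne := adj_ne hg hab
    rw [← Finset.sum_filter]
    have : (Finset.univ.filter fun x => x ∈ s(a, b)) = {a, b} := by
      ext x; simp
    rw [this, Finset.sum_pair hne, sg_adj hg hab]
    ring

lemma bdeg_le (hg : Good m n) {A : Finset (Sym2 (Vtx m n))} (hA : A ⊆ honeyEdges m n) (x : Vtx m n) :
    bdeg m n A x ≤ 3 := by
  have := bdeg_add hg hA x; omega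

lemma bdeg_two (hg : Good m n) {A : Finset (Sym2 (Vtx m n))} {u v x : Vtx m n}
    (h : IsWormState m n A u v) (hf : bdeg m n A x ≠ 0) (hx : ¬ ((x = u ∨ x = v) ∧ u ≠ v)) :
    bdeg m n A x = 2 := by
  have h1 := bdeg_le hg h.1 x
  have h2 : ¬ Odd (bdeg m n A x) := fun ho => hx ((h.2 x).1 ho)
  rw [Nat.not_odd_iff_even] at h2
  obtain ⟨k, hk⟩ := h2
  omega

lemma bdeg_odd (hg : Good m n) {A : Finset (Sym2 (Vtx m n))} {u v x : Vtx m n}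
    (h : IsWormState m n A u v) (hx : ((x = u ∨ x = v) ∧ u ≠ v)) :
    bdeg m n A x = 1 ∨ bdeg m n A x = 3 := by
  have h1 := bdeg_le hg h.1 x
  have h2 : Odd (bdeg m n A x) := (h.2 x).2 hx
  obtain ⟨k, hk⟩ := h2
  omega

lemma deg_balance (hg : Good m n) {A : Finset (Sym2 (Vtx m n))} {u v : Vtx m n}
    (h : IsWormState m n A u v) (hf : ∀ x, bdeg m n A x ≠ 0) (huv : u ≠ v) :
    sg u * ((bdeg m n A u : ℤ) - 2) + sg v * ((bdeg m n A v : ℤ) - 2) = 0 := by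
  have h1 : ∑ x : Vtx m n, sg x * ((bdeg m n A x : ℤ) - 2) = 0 := by
    simp only [mul_sub, Finset.sum_sub_distrib, sum_sg_bdeg hg h.1, ← Finset.sum_mul, sum_sg hg]
    simp
  rw [← Finset.sum_subset (Finset.subset_univ {u, v}), Finset.sum_pair huv] at h1
  · exact h1
  · intro x _ hx
    simp only [Finset.mem_insert, Finset.mem_singleton] at hx
    rw [bdeg_two hg h (hf x) (by tauto)]
    simp

lemma deg_opp (hg : Good m n) {A : Finset (Sym2 (Vtx m n))} {u v : Vtx m n}
    (h : IsWormState m n A u v) (hf : ∀ x, bdeg m n A x ≠ 0) (huv : u ≠ v) (hs : sg u = - sg v) :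
    bdeg m n A u = bdeg m n A v := by
  have := deg_balance hg h hf huv
  rw [hs] at this
  rcases sg_cases v with h1 | h1 <;> rw [h1] at this <;> omega

lemma deg_same (hg : Good m n) {A : Finset (Sym2 (Vtx m n))} {u v : Vtx m n}
    (h : IsWormState m n A u v) (hf : ∀ x, bdeg m n A x ≠ 0) (huv : u ≠ v) (hs : sg u = sg v) :
    bdeg m n A u + bdeg m n A v = 4 := by
  have := deg_balance hg h hf huv
  rw [hs] at this
  rcases sg_cases v with h1 | h1 <;> rw [h1] at this <;> omega
/-- Raw configurations. -/
abbrev Cfg (m n : ℕ) := Finset (Sym2 (Vtx m n)) × Vtx m n × Vtx m n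

/-- Elementary moves of positive probability. -/
inductive RStep : Cfg m n → Cfg m n → Prop
  | c1 (A : Finset (Sym2 (Vtx m n))) (v w : Vtx m n) (h : HoneyAdj m n v w) (he : s(v, w) ∉ A) :
      RStep (A, v, v) (tog A s(v, w), w, v)
  | m1 (A : Finset (Sym2 (Vtx m n))) (u v w : Vtx m n) (huv : u ≠ v) (h : HoneyAdj m n u w)
      (he : (bdeg m n A u = 3 ∧ s(u, w) ∈ A) ∨ (bdeg m n A u = 1 ∧ s(u, w) ∉ A)) :
      RStep (A, u, v) (tog A s(u, w), w, v)
  | m2 (A : Finset (Sym2 (Vtx m n))) (u v w : Vtx m n) (huv : u ≠ v) (h : HoneyAdj m n v w)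
      (he : (bdeg m n A v = 3 ∧ s(v, w) ∈ A) ∨ (bdeg m n A v = 1 ∧ s(v, w) ∉ A)) :
      RStep (A, u, v) (tog A s(v, w), u, w)

lemma RStep_valid (hg : Good m n) {p q : Cfg m n} (h : RStep p q)
    (hp : IsWormState m n p.1 p.2.1 p.2.2) : IsWormState m n q.1 q.2.1 q.2.2 := by
  cases h with
  | c1 A v w h he => exact tog_valid hg hp h
  | m1 A u v w huv h he => exact tog_valid hg hp h
  | m2 A u v w huv h he => exact tog_valid' hg hp h

lemma tog_add {A : Finset (Sym2 (Vtx m n))} {a b : Vtx m n} (h : s(a, b) ∉ A) :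
    ∃ A1, A1 = tog A s(a, b) ∧ (∀ f, f ∈ A1 ↔ f = s(a, b) ∨ f ∈ A) ∧
      (∀ x, bdeg m n A1 x = bdeg m n A x + if x = a ∨ x = b then 1 else 0) := by
  refine ⟨_, rfl, ?_, ?_⟩
  · intro f; rw [tog_of_notMem h, Finset.mem_insert]
  · intro x; rw [tog_of_notMem h, bdeg_insert h]

lemma tog_rem {A : Finset (Sym2 (Vtx m n))} {a b : Vtx m n} (h : s(a, b) ∈ A) :
    ∃ A1, A1 = tog A s(a, b) ∧ (∀ f, f ∈ A1 ↔ f ≠ s(a, b) ∧ f ∈ A) ∧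
      (∀ x, bdeg m n A1 x + (if x = a ∨ x = b then 1 else 0) = bdeg m n A x) := by
  refine ⟨_, rfl, ?_, ?_⟩
  · intro f; rw [tog_of_mem h, Finset.mem_erase]
  · intro x; rw [tog_of_mem h, bdeg_erase h]

lemma tog_comm (A : Finset (Sym2 (Vtx m n))) (e f : Sym2 (Vtx m n)) :
    tog (tog A e) f = tog (tog A f) e := by
  ext g
  simp only [mem_tog]
  by_cases h1 : g = e <;> by_cases h2 : g = f <;> by_cases h3 : e = f <;> simp_all

noncomputable def Phi (A : Finset (Sym2 (Vtx m n))) : ℕ := (symmDiff A (Hconfig m n)).card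

lemma Phi_tog {A : Finset (Sym2 (Vtx m n))} {e : Sym2 (Vtx m n)}
    (h : e ∈ A ↔ e ∉ Hconfig m n) : Phi (tog A e) < Phi A := by
  unfold Phi
  apply Finset.card_lt_card
  rw [Finset.ssubset_iff_of_subset]
  · refine ⟨e, ?_, ?_⟩
    · rw [Finset.mem_symmDiff]; tauto
    · rw [Finset.mem_symmDiff, mem_tog]; tauto
  · intro f
    rw [Finset.mem_symmDiff, Finset.mem_symmDiff, mem_tog]
    by_cases hf : f = e
    · subst hf; tauto
    · tauto

lemma edge_of_three (hg : Good m n) {A : Finset (Sym2 (Vtx m n))} (hA : A ⊆ honeyEdges m n)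
    {x z : Vtx m n} (hd : bdeg m n A x = 3) (hz : HoneyAdj m n x z) : s(x, z) ∈ A := by
  have h := bdeg_add hg hA x
  rw [hd] at h
  have h0 : ((Nb x).filter fun z => s(x, z) ∉ A).card = 0 := by omega
  rw [Finset.card_eq_zero] at h0
  by_contra hc
  have : z ∈ ((Nb x).filter fun z => s(x, z) ∉ A) := by
    simp [mem_Nb, hz, hc]
  rw [h0] at this
  simp at this

lemma not_edge_of_zero {A : Finset (Sym2 (Vtx m n))}
    {x z : Vtx m n} (hd : bdeg m n A x = 0) : s(x, z) ∉ A := by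
  unfold bdeg at hd
  rw [Finset.card_eq_zero] at hd
  intro hc
  have : s(x, z) ∈ A.filter fun e => x ∈ e := by simp [hc]
  rw [hd] at this
  simp at this

lemma missing_of_two (hg : Good m n) {A : Finset (Sym2 (Vtx m n))} (hA : A ⊆ honeyEdges m n)
    {x : Vtx m n} (hd : bdeg m n A x = 2) :
    ∃ z, HoneyAdj m n x z ∧ s(x, z) ∉ A ∧ ∀ y, HoneyAdj m n x y → y ≠ z → s(x, y) ∈ A := by
  have h := bdeg_add hg hA x
  rw [hd] at h
  have h0 : ((Nb x).filter fun z => s(x, z) ∉ A).card = 1 := by omega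
  rw [Finset.card_eq_one] at h0
  obtain ⟨z, hz⟩ := h0
  have h1 : ∀ y, (HoneyAdj m n x y ∧ s(x, y) ∉ A) ↔ y = z := by
    intro y
    have := Finset.ext_iff.1 hz y
    simpa [mem_Nb] using this
  refine ⟨z, ((h1 z).2 rfl).1, ((h1 z).2 rfl).2, fun y hy hne => ?_⟩
  by_contra hc
  exact hne ((h1 y).1 ⟨hy, hc⟩)

/-- An open configuration can always decrease `Phi`. -/
lemma open_drop (hg : Good m n) {A : Finset (Sym2 (Vtx m n))} {u v : Vtx m n}
    (h : IsWormState m n A u v) (huv : u ≠ v) :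
    ∃ q, RStep (A, u, v) q ∧ Phi q.1 < Phi A := by
  rcases bdeg_odd hg h (x := u) ⟨Or.inl rfl, huv⟩ with hd | hd
  · have h3 := bdeg_add hg h.1 u
    rw [hd] at h3
    obtain ⟨w, hw, hne⟩ := Finset.exists_mem_ne (s := (Nb u).filter fun z => s(u, z) ∉ A)
      (by omega) (vert u)
    rw [Finset.mem_filter, mem_Nb] at hw
    refine ⟨_, .m1 A u v w huv hw.1 (Or.inr ⟨hd, hw.2⟩), Phi_tog ?_⟩
    have := H_mem hg hw.1 hne
    tauto
  · have hm := edge_of_three hg h.1 hd (vert_adj hg u)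
    refine ⟨_, .m1 A u v (vert u) huv (vert_adj hg u) (Or.inl ⟨hd, hm⟩), Phi_tog ?_⟩
    have := H_notMem hg u
    tauto

/-- A closed configuration whose root sees a difference with `Hconfig` can decrease `Phi`. -/
lemma closed_drop (hg : Good m n) {A : Finset (Sym2 (Vtx m n))} {v z : Vtx m n}
    (h : IsWormState m n A v v) (hz : HoneyAdj m n v z)
    (hdiff : ¬ (s(v, z) ∈ A ↔ s(v, z) ∈ Hconfig m n)) :
    ∃ q, RStep (A, v, v) q ∧ Phi q.1 < Phi A := by
  have key : ∃ w, HoneyAdj m n v w ∧ s(v, w) ∉ A ∧ s(v, w) ∈ Hconfig m n := by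
    by_cases h0 : bdeg m n A v = 0
    · obtain ⟨w, hw, hne⟩ := Finset.exists_mem_ne (s := Nb v) (by rw [Nb_card hg]; omega) (vert v)
      rw [mem_Nb] at hw
      exact ⟨w, hw, not_edge_of_zero h0, H_mem hg hw hne⟩
    · have h2 := bdeg_two hg h h0 (by simp)
      obtain ⟨w, hw, hwA, hall⟩ := missing_of_two hg h.1 h2
      refine ⟨w, hw, hwA, ?_⟩
      apply H_mem hg hw
      rintro rfl
      apply hdiff
      by_cases hzv : z = vert v
      · subst hzv
        have := H_notMem hg v
        tauto
      · have h1 := hall z hz hzv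
        have h2 := H_mem hg hz hzv
        tauto
  obtain ⟨w, hw, hwA, hwH⟩ := key
  refine ⟨_, .c1 A v w hw hwA, Phi_tog ?_⟩
  tauto

set_option maxHeartbeats 8000000 in
lemma walk (hg : Good m n) {A : Finset (Sym2 (Vtx m n))} {v w : Vtx m n}
    (h : IsWormState m n A v v) (hvw : HoneyAdj m n v w) :
    (∃ q, Relation.ReflTransGen RStep (A, v, v) q ∧ Phi q.1 < Phi A) ∨
      Relation.ReflTransGen RStep (A, v, v) (A, w, w) := by
  by_cases hagree : ∀ z, HoneyAdj m n v z → (s(v, z) ∈ A ↔ s(v, z) ∈ Hconfig m n)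
  swap
  · push Not at hagree
    obtain ⟨z, hz, hd⟩ := hagree
    obtain ⟨q, hq, hp⟩ := closed_drop hg h hz (by tauto)
    exact Or.inl ⟨q, .single hq, hp⟩
  have hcases : ∀ x, bdeg m n A x = 0 ∨ bdeg m n A x = 2 := fun x => by
    by_cases h0 : bdeg m n A x = 0
    · exact Or.inl h0
    · exact Or.inr (bdeg_two hg h h0 (by simp))
  have hdv : bdeg m n A v = 2 := by
    rcases hcases v with h0 | h0
    · exfalso
      obtain ⟨z, hz, hne⟩ := Finset.exists_mem_ne (s := Nb v) (by rw [Nb_card hg]; omega) (vert v)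
      rw [mem_Nb] at hz
      exact not_edge_of_zero h0 ((hagree z hz).2 (H_mem hg hz hne))
    · exact h0
  obtain ⟨v', hv', hvA, hall⟩ := missing_of_two hg h.1 hdv
  have hvH : s(v, v') ∉ Hconfig m n := fun hc => hvA ((hagree v' hv').2 hc)
  have hvpv : v' = vert v := by
    by_contra hc
    exact hvH (H_mem hg hv' hc)
  have nvv' : v ≠ v' := adj_ne hg hv'
  obtain ⟨A1, eA1, m1, d1⟩ := tog_add hvA
  have s1 : RStep (A, v, v) (A1, v', v) := by rw [eA1]; exact .c1 A v v' hv' hvA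
  have dv1 : bdeg m n A1 v = 3 := by rw [d1]; simp [hdv]
  have back : RStep (A1, v', v) (A, v', v') := by
    have := RStep.m2 A1 v' v v' nvv'.symm hv' (Or.inl ⟨dv1, (m1 _).2 (Or.inl rfl)⟩)
    rwa [eA1, tog_tog, ← eA1] at this
  by_cases hwv' : w = v'
  · subst hwv'
    right
    exact (Relation.ReflTransGen.single s1).tail back
  have hvwA := hall w hvw hwv'
  have nvw : v ≠ w := adj_ne hg hvw
  rcases hcases v' with hd' | hd'
  · left
    obtain ⟨a, ha, hne⟩ := Finset.exists_mem_ne (s := Nb v') (by rw [Nb_card hg]; omega) v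
    rw [mem_Nb] at ha
    have haA : s(v', a) ∉ A := not_edge_of_zero hd'
    have hvert : vert v' = v := by
      by_contra hc
      apply hvH
      rw [Sym2.eq_swap]
      exact H_mem hg (adj_symm hv') (Ne.symm hc)
    have haH : s(v', a) ∈ Hconfig m n := H_mem hg ha (by rw [hvert]; exact hne)
    have nav' : v' ≠ a := adj_ne hg ha
    have ne1 : s(v', a) ≠ s(v, v') := by
      rw [Ne, Sym2.eq_iff]; tauto
    have haA1 : s(v', a) ∉ A1 := by rw [m1]; tauto
    have s2 := RStep.m1 A1 v' v a nvv'.symm ha (Or.inr ⟨by rw [d1]; simp [hd'], haA1⟩)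
    obtain ⟨A2, eA2, m2, d2⟩ := tog_add haA1
    rw [← eA2] at s2
    have s3 := RStep.m2 A2 a v v' hne hv' (Or.inl ⟨by rw [d2, dv1]; simp [nvv', hne.symm],
      by rw [m2, m1]; tauto⟩)
    refine ⟨_, ((Relation.ReflTransGen.single s1).tail s2).tail s3, ?_⟩
    show Phi (tog A2 s(v, v')) < Phi A
    rw [eA2, eA1, tog_comm, tog_tog]
    apply Phi_tog
    tauto
  · have hdw : bdeg m n A w = 2 := by
      rcases hcases w with h0 | h0
      · exact absurd (by rw [Sym2.eq_swap]; exact hvwA) (not_edge_of_zero (z := v) h0)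
      · exact h0
    obtain ⟨w', hw', hwA, hallw⟩ := missing_of_two hg h.1 hdw
    have nww' : w ≠ w' := adj_ne hg hw'
    have nwvA : w' ≠ v := by
      rintro rfl
      apply hwA
      rw [Sym2.eq_swap]; exact hvwA
    have sw := sg_adj hg hvw
    have sv' := sg_adj hg hv'
    have sw' := sg_adj hg hw'
    have sgne : ∀ x : Vtx m n, sg x ≠ - sg x := by
      intro x; rcases sg_cases x with h | h <;> rw [h] <;> decide
    have nwvB : w' ≠ v' := by
      rintro rfl
      rw [sw', sw] at sv'
      exact sgne v (by linarith)
    have e21 : s(v, w) ≠ s(v, v') := by rw [Ne, Sym2.eq_iff]; tauto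
    have e31 : s(w, w') ≠ s(v, v') := by rw [Ne, Sym2.eq_iff]; tauto
    have e32 : s(w, w') ≠ s(v, w) := by rw [Ne, Sym2.eq_iff]; tauto
    have swp : s(v', v) = s(v, v') := Sym2.eq_swap
    have swq : s(w', w) = s(w, w') := Sym2.eq_swap
    have h2A1 : s(v, w) ∈ A1 := by rw [m1]; tauto
    obtain ⟨A2, eA2, m2, d2⟩ := tog_rem h2A1
    have s2 := RStep.m2 A1 v' v w nvv'.symm hvw (Or.inl ⟨dv1, h2A1⟩)
    rw [← eA2] at s2
    have h3A2 : s(w, w') ∉ A2 := by rw [m2, m1]; tauto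
    obtain ⟨A3, eA3, m3, d3⟩ := tog_add h3A2
    have dw1 : bdeg m n A1 w = 2 := by rw [d1]; simp [hdw, nvw.symm, hwv']
    have dw2 : bdeg m n A2 w = 1 := by have := d2 w; simp at this; omega
    have s3 := RStep.m2 A2 v' w w' (Ne.symm hwv') hw' (Or.inr ⟨dw2, h3A2⟩)
    rw [← eA3] at s3
    have hS3 : Relation.ReflTransGen RStep (A, v, v) (A3, v', w') :=
      ((Relation.ReflTransGen.single s1).tail s2).tail s3
    have dvp1 : bdeg m n A1 v' = 3 := by rw [d1]; simp [hd']
    have dvp2 : bdeg m n A2 v' = 3 := by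
      have := d2 v'; simp [nvv'.symm, Ne.symm hwv'] at this; omega
    have dvp3 : bdeg m n A3 v' = 3 := by rw [d3]; simp [dvp2, Ne.symm hwv', nwvB.symm]
    have dv2 : bdeg m n A2 v = 2 := by have := d2 v; simp at this; omega
    have dv3 : bdeg m n A3 v = 2 := by rw [d3]; simp [dv2, nvw, nwvA.symm]
    have dw3 : bdeg m n A3 w = 2 := by rw [d3]; simp [dw2]
    have dwp1 : bdeg m n A1 w' = bdeg m n A w' := by rw [d1]; simp [nwvA, nwvB]
    have dwp2 : bdeg m n A2 w' = bdeg m n A w' := by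
      have := d2 w'; simp [nwvA, nww'.symm] at this; omega
    have dwp3 : bdeg m n A3 w' = bdeg m n A w' + 1 := by rw [d3]; simp [dwp2]
    have h1A3 : s(v, v') ∈ A3 := by rw [m3, m2, m1]; tauto
    have h2A3 : s(v, w) ∉ A3 := by rw [m3, m2, m1]; tauto
    have h3A3 : s(w, w') ∈ A3 := by rw [m3]; tauto
    have hvall : ∀ y, HoneyAdj m n v' y → y ≠ v → s(v', y) ∈ A := by
      obtain ⟨z, hz, hzA, hzall⟩ := missing_of_two hg h.1 hd'
      have : z = v := by
        by_contra hc
        apply hvA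
        rw [← swp]
        exact hzall v (adj_symm hv') (Ne.symm hc)
      rw [← this]; exact hzall
    rcases hcases w' with hdw' | hdw'
    · left
      have hex : ∃ a ∈ Nb w', a ∉ ({w, vert w'} : Finset (Vtx m n)) := by
        apply Finset.exists_mem_notMem_of_card_lt_card
        rw [Nb_card hg]
        exact lt_of_le_of_lt Finset.card_le_two (by norm_num)
      obtain ⟨a, ha, hne⟩ := hex
      rw [mem_Nb] at ha
      simp only [Finset.mem_insert, Finset.mem_singleton, not_or] at hne
      obtain ⟨naw, nav⟩ := hne
      have haA : s(w', a) ∉ A := not_edge_of_zero hdw'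
      have haH : s(w', a) ∈ Hconfig m n := H_mem hg ha nav
      have naw' : w' ≠ a := adj_ne hg ha
      have sa := sg_adj hg ha
      have nav0 : a ≠ v := by
        rintro rfl
        rw [sw', sw] at sa
        exact sgne a (by linarith)
      have nav' : a ≠ v' := by
        rintro rfl
        apply haA
        rw [Sym2.eq_swap]
        exact hvall w' (adj_symm ha) nwvA
      have e41 : s(w', a) ≠ s(v, v') := by rw [Ne, Sym2.eq_iff]; tauto
      have e42 : s(w', a) ≠ s(v, w) := by rw [Ne, Sym2.eq_iff]; tauto
      have e43 : s(w', a) ≠ s(w, w') := by rw [Ne, Sym2.eq_iff]; tauto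
      have h4A3 : s(w', a) ∉ A3 := by rw [m3, m2, m1]; tauto
      have s4 := RStep.m2 A3 v' w' a nwvB.symm ha (Or.inr ⟨by rw [dwp3, hdw'], h4A3⟩)
      obtain ⟨A4, eA4, m4, d4⟩ := tog_add h4A3
      rw [← eA4] at s4
      have h1A4 : s(v', v) ∈ A4 := by rw [m4, swp]; tauto
      have dvp4 : bdeg m n A4 v' = 3 := by rw [d4]; simp [dvp3, nwvB.symm, nav'.symm]
      have dv4 : bdeg m n A4 v = 2 := by rw [d4]; simp [dv3, nwvA.symm, nav0.symm]
      have dw4 : bdeg m n A4 w = 2 := by rw [d4]; simp [dw3, nww', Ne.symm naw]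
      have s5 := RStep.m1 A4 v' a v nav'.symm (adj_symm hv') (Or.inl ⟨dvp4, h1A4⟩)
      obtain ⟨A5, eA5, m5, d5⟩ := tog_rem h1A4
      rw [← eA5] at s5
      have dv5 : bdeg m n A5 v = 1 := by have := d5 v; simp at this; omega
      have dw5 : bdeg m n A5 w = 2 := by
        have := d5 w; simp [hwv', nvw.symm] at this; omega
      have h2A5 : s(v, w) ∉ A5 := by
        rw [m5, m4]; have := e42.symm; tauto
      have s6 := RStep.m1 A5 v a w nav0.symm hvw (Or.inr ⟨dv5, h2A5⟩)
      obtain ⟨A6, eA6, m6, d6⟩ := tog_add h2A5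
      rw [← eA6] at s6
      have dw6 : bdeg m n A6 w = 3 := by rw [d6]; simp [dw5]
      have h3A6 : s(w, w') ∈ A6 := by
        rw [m6, m5, m4, swp]; tauto
      have s7 := RStep.m1 A6 w a w' (Ne.symm naw) hw' (Or.inl ⟨dw6, h3A6⟩)
      refine ⟨_, (((hS3.tail s4).tail s5).tail s6).tail s7, ?_⟩
      show Phi (tog A6 s(w, w')) < Phi A
      have : tog A6 s(w, w') = tog A s(w', a) := by
        rw [eA6, eA5, eA4, eA3, eA2, eA1, swp]
        rw [tog_comm _ (s(w', a)) (s(v, v')), tog_comm _ (s(w', a)) (s(v, w)),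
          tog_comm _ (s(w', a)) (s(w, w')), tog_comm _ (s(w, w')) (s(v, v')),
          tog_comm _ (s(v, w)) (s(v, v')), tog_tog, tog_comm _ (s(w, w')) (s(v, w)), tog_tog,
          tog_tog]
      rw [this]
      apply Phi_tog
      tauto
    · right
      have h1A3' : s(v', v) ∈ A3 := by rw [swp]; exact h1A3
      have s4 := RStep.m1 A3 v' w' v nwvB.symm (adj_symm hv') (Or.inl ⟨dvp3, h1A3'⟩)
      obtain ⟨A4, eA4, m4, d4⟩ := tog_rem h1A3'
      rw [← eA4] at s4
      have dv4 : bdeg m n A4 v = 1 := by have := d4 v; simp at this; omega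
      have dwp4 : bdeg m n A4 w' = 3 := by
        have := d4 w'; simp [nwvA, nwvB] at this; omega
      have h2A4 : s(v, w) ∉ A4 := by rw [m4]; tauto
      have s5 := RStep.m1 A4 v w' w nwvA.symm hvw (Or.inr ⟨dv4, h2A4⟩)
      obtain ⟨A5, eA5, m5, d5⟩ := tog_add h2A4
      rw [← eA5] at s5
      have dwp5 : bdeg m n A5 w' = 3 := by rw [d5]; simp [dwp4, nwvA, nww'.symm]
      have h3A5 : s(w', w) ∈ A5 := by rw [m5, m4, swq, swp]; tauto
      have s6 := RStep.m2 A5 w w' w nww' (adj_symm hw') (Or.inl ⟨dwp5, h3A5⟩)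
      have : tog A5 s(w', w) = A := by
        rw [eA5, eA4, eA3, eA2, eA1, swp, swq]
        rw [tog_comm _ (s(w, w')) (s(v, v')),
          tog_comm _ (s(v, w)) (s(v, v')), tog_tog, tog_comm _ (s(w, w')) (s(v, w)), tog_tog,
          tog_tog]
      rw [this] at s6
      exact ((hS3.tail s4).tail s5).tail s6

lemma RS_valid (hg : Good m n) {p q : Cfg m n} (h : Relation.ReflTransGen RStep p q)
    (hp : IsWormState m n p.1 p.2.1 p.2.2) : IsWormState m n q.1 q.2.1 q.2.2 := by
  induction h with
  | refl => exact hp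
  | tail _ h2 ih => exact RStep_valid hg h2 ih

lemma walk_far (hg : Good m n) {A : Finset (Sym2 (Vtx m n))} {v w : Vtx m n}
    (h : IsWormState m n A v v) (hvw : Relation.ReflTransGen (HoneyAdj m n) v w) :
    (∃ q, Relation.ReflTransGen RStep (A, v, v) q ∧ Phi q.1 < Phi A) ∨
      Relation.ReflTransGen RStep (A, v, v) (A, w, w) := by
  induction hvw with
  | refl => exact Or.inr .refl
  | tail _ h2 ih =>
    rcases ih with ih | ih
    · exact Or.inl ih
    · rcases walk hg (RS_valid hg ih h) h2 with ⟨q, hq, hp⟩ | hq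
      · exact Or.inl ⟨q, ih.trans hq, hp⟩
      · exact Or.inr (ih.trans hq)

lemma reach_all (hg : Good m n) (N : ℕ) : ∀ (A : Finset (Sym2 (Vtx m n))) (u v : Vtx m n),
    Phi A = N → IsWormState m n A u v →
    Relation.ReflTransGen RStep (A, u, v) (Hconfig m n, 0, 0) := by
  induction N using Nat.strong_induction_on with
  | _ N ih =>
    intro A u v hN h
    have fin : ∀ q : Cfg m n, Relation.ReflTransGen RStep (A, u, v) q → Phi q.1 < Phi A →
        Relation.ReflTransGen RStep (A, u, v) (Hconfig m n, 0, 0) := by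
      rintro ⟨B, a, b⟩ hq hp
      exact hq.trans (ih _ (hN ▸ hp) B a b rfl (RS_valid hg hq h))
    by_cases huv : u = v
    · subst huv
      by_cases hAH : A = Hconfig m n
      · rcases walk_far hg h (conn hg u 0) with ⟨q, hq, hp⟩ | hq
        · exact fin q hq hp
        · rw [hAH] at hq ⊢; exact hq
      · have hex : ∃ x z, HoneyAdj m n x z ∧ ¬ (s(x, z) ∈ A ↔ s(x, z) ∈ Hconfig m n) := by
          by_contra hc
          push Not at hc
          apply hAH
          ext e
          induction e using Sym2.ind with
          | _ x z =>
            by_cases hxz : HoneyAdj m n x z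
            · have := hc x z hxz; tauto
            · constructor
              · intro h1; exact absurd (mem_edges.1 (h.1 h1)) hxz
              · intro h1; exact absurd (mem_edges.1 (H_sub h1)) hxz
        obtain ⟨x, z, hxz, hd⟩ := hex
        rcases walk_far hg h (conn hg u x) with ⟨q, hq, hp⟩ | hq
        · exact fin q hq hp
        · obtain ⟨q, h1, h2⟩ := closed_drop hg (RS_valid hg hq h) hxz hd
          exact fin q (hq.tail h1) h2
    · obtain ⟨q, h1, h2⟩ := open_drop hg h huv
      exact fin q (.single h1) h2
lemma ite_nn (p : Prop) [Decidable p] {c : ℝ} (hc : 0 ≤ c) : 0 ≤ if p then c else 0 := by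
  split_ifs <;> simp [hc]

lemma P_nonneg (st tt : WormState m n) : 0 ≤ Pinf m n st tt := by
  unfold Pinf
  split_ifs <;> positivity

lemma P_e1 {st tt : WormState m n} (hne : st.1.2.1 ≠ st.1.2.2) (hd : bdeg m n st.1.1 st.1.2.1 = 3)
    {w : Vtx m n} (hw : HoneyAdj m n st.1.2.1 w) (he : s(st.1.2.1, w) ∈ st.1.1)
    (ht : tt.1 = (st.1.1.erase s(st.1.2.1, w), w, st.1.2.2)) : 1 / 6 ≤ Pinf m n st tt := by
  unfold Pinf
  rw [if_neg hne]
  have h : (bdeg m n st.1.1 st.1.2.1 = 3 ∧ ∃ u' : Vtx m n, HoneyAdj m n st.1.2.1 u' ∧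
        s(st.1.2.1, u') ∈ st.1.1 ∧ tt.1.1 = st.1.1.erase s(st.1.2.1, u') ∧
        tt.1.2.1 = u' ∧ tt.1.2.2 = st.1.2.2) := ⟨hd, w, hw, he, by rw [ht], by rw [ht], by rw [ht]⟩
  rw [if_pos h]
  refine le_add_of_le_of_nonneg (le_add_of_le_of_nonneg (le_add_of_le_of_nonneg le_rfl ?_) ?_) ?_ <;>
    exact ite_nn _ (by norm_num)

lemma P_i1 {st tt : WormState m n} (hne : st.1.2.1 ≠ st.1.2.2) (hd : bdeg m n st.1.1 st.1.2.1 = 1)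
    {w : Vtx m n} (hw : HoneyAdj m n st.1.2.1 w) (he : s(st.1.2.1, w) ∉ st.1.1)
    (ht : tt.1 = (insert s(st.1.2.1, w) st.1.1, w, st.1.2.2)) : 1 / 4 ≤ Pinf m n st tt := by
  unfold Pinf
  rw [if_neg hne]
  have h : (bdeg m n st.1.1 st.1.2.1 = 1 ∧ ∃ u' : Vtx m n, HoneyAdj m n st.1.2.1 u' ∧
        s(st.1.2.1, u') ∉ st.1.1 ∧ tt.1.1 = insert s(st.1.2.1, u') st.1.1 ∧
        tt.1.2.1 = u' ∧ tt.1.2.2 = st.1.2.2) := ⟨hd, w, hw, he, by rw [ht], by rw [ht], by rw [ht]⟩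
  rw [if_pos h]
  refine le_add_of_le_of_nonneg (le_add_of_le_of_nonneg (le_add_of_nonneg_of_le ?_ le_rfl) ?_) ?_ <;>
    exact ite_nn _ (by norm_num)

lemma P_e2 {st tt : WormState m n} (hne : st.1.2.1 ≠ st.1.2.2) (hd : bdeg m n st.1.1 st.1.2.2 = 3)
    {w : Vtx m n} (hw : HoneyAdj m n st.1.2.2 w) (he : s(st.1.2.2, w) ∈ st.1.1)
    (ht : tt.1 = (st.1.1.erase s(st.1.2.2, w), st.1.2.1, w)) : 1 / 6 ≤ Pinf m n st tt := by
  unfold Pinf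
  rw [if_neg hne]
  have h : (bdeg m n st.1.1 st.1.2.2 = 3 ∧ ∃ v' : Vtx m n, HoneyAdj m n st.1.2.2 v' ∧
        s(st.1.2.2, v') ∈ st.1.1 ∧ tt.1.1 = st.1.1.erase s(st.1.2.2, v') ∧
        tt.1.2.1 = st.1.2.1 ∧ tt.1.2.2 = v') := ⟨hd, w, hw, he, by rw [ht], by rw [ht], by rw [ht]⟩
  rw [if_pos h]
  refine le_add_of_le_of_nonneg (le_add_of_nonneg_of_le (add_nonneg ?_ ?_) le_rfl) ?_ <;>
    exact ite_nn _ (by norm_num)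

lemma P_i2 {st tt : WormState m n} (hne : st.1.2.1 ≠ st.1.2.2) (hd : bdeg m n st.1.1 st.1.2.2 = 1)
    {w : Vtx m n} (hw : HoneyAdj m n st.1.2.2 w) (he : s(st.1.2.2, w) ∉ st.1.1)
    (ht : tt.1 = (insert s(st.1.2.2, w) st.1.1, st.1.2.1, w)) : 1 / 4 ≤ Pinf m n st tt := by
  unfold Pinf
  rw [if_neg hne]
  have h : (bdeg m n st.1.1 st.1.2.2 = 1 ∧ ∃ v' : Vtx m n, HoneyAdj m n st.1.2.2 v' ∧
        s(st.1.2.2, v') ∉ st.1.1 ∧ tt.1.1 = insert s(st.1.2.2, v') st.1.1 ∧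
        tt.1.2.1 = st.1.2.1 ∧ tt.1.2.2 = v') := ⟨hd, w, hw, he, by rw [ht], by rw [ht], by rw [ht]⟩
  rw [if_pos h]
  refine le_add_of_nonneg_of_le (add_nonneg (add_nonneg ?_ ?_) ?_) le_rfl <;>
    exact ite_nn _ (by norm_num)

lemma P_id {st : WormState m n} (heq : st.1.2.1 = st.1.2.2) :
    (bdeg m n st.1.1 st.1.2.2 : ℝ) / 3 ≤ Pinf m n st st := by
  unfold Pinf
  rw [if_pos heq, if_pos rfl]
  exact le_add_of_nonneg_right (ite_nn _ (by norm_num))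

lemma P_c {st tt : WormState m n} (heq : st.1.2.1 = st.1.2.2)
    {w : Vtx m n} (hw : HoneyAdj m n st.1.2.2 w) (he : s(st.1.2.2, w) ∉ st.1.1)
    (ht : tt.1 = (insert s(st.1.2.2, w) st.1.1, w, st.1.2.2) ∨
      tt.1 = (insert s(st.1.2.2, w) st.1.1, st.1.2.2, w)) : 1 / 6 ≤ Pinf m n st tt := by
  unfold Pinf
  rw [if_pos heq]
  have h : ∃ v' : Vtx m n, HoneyAdj m n st.1.2.2 v' ∧ s(st.1.2.2, v') ∉ st.1.1 ∧
        tt.1.1 = insert s(st.1.2.2, v') st.1.1 ∧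
        ((tt.1.2.1 = v' ∧ tt.1.2.2 = st.1.2.2) ∨ (tt.1.2.1 = st.1.2.2 ∧ tt.1.2.2 = v')) := by
    refine ⟨w, hw, he, ?_⟩
    rcases ht with ht | ht <;> rw [ht] <;> simp
  rw [if_pos h]
  exact le_add_of_nonneg_left (ite_nn _ (by positivity))

lemma RStep_pos {p q : Cfg m n} (h : RStep p q)
    (hp : IsWormState m n p.1 p.2.1 p.2.2) (hq : IsWormState m n q.1 q.2.1 q.2.2) :
    0 < Pinf m n ⟨p, hp⟩ ⟨q, hq⟩ := by
  cases h with
  | c1 A v w h he =>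
    refine lt_of_lt_of_le (by norm_num) (P_c rfl h he (Or.inl ?_))
    show (tog A s(v, w), w, v) = _
    rw [tog_of_notMem he]
  | m1 A u v w huv h he =>
    rcases he with ⟨hd, he⟩ | ⟨hd, he⟩
    · refine lt_of_lt_of_le (by norm_num) (P_e1 huv hd h he ?_)
      show (tog A s(u, w), w, v) = _
      rw [tog_of_mem he]
    · refine lt_of_lt_of_le (by norm_num) (P_i1 huv hd h he ?_)
      show (tog A s(u, w), w, v) = _
      rw [tog_of_notMem he]
  | m2 A u v w huv h he =>
    rcases he with ⟨hd, he⟩ | ⟨hd, he⟩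
    · refine lt_of_lt_of_le (by norm_num) (P_e2 huv hd h he ?_)
      show (tog A s(v, w), u, w) = _
      rw [tog_of_mem he]
    · refine lt_of_lt_of_le (by norm_num) (P_i2 huv hd h he ?_)
      show (tog A s(v, w), u, w) = _
      rw [tog_of_notMem he]

lemma sum_ite_le {ι : Type*} (C : WormState m n → Prop) [DecidablePred C] (s : Finset ι)
    (g : ι → Cfg m n) (hC : ∀ tt, C tt → ∃ w ∈ s, g w = tt.1) {c : ℝ} (hc : 0 ≤ c) :
    ∑ tt, (if C tt then c else 0) ≤ s.card * c := by
  rw [← Finset.sum_filter, Finset.sum_const, nsmul_eq_mul]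
  apply mul_le_mul_of_nonneg_right _ hc
  rw [Nat.cast_le, ← Finset.card_image_of_injective _ Subtype.val_injective]
  refine le_trans (Finset.card_le_card ?_) (Finset.card_image_le (s := s) (f := g))
  intro p hp
  simp only [Finset.mem_image, Finset.mem_filter, Finset.mem_univ, true_and] at hp ⊢
  obtain ⟨tt, h1, rfl⟩ := hp
  exact hC tt h1

lemma row_sum (hg : Good m n) (st : WormState m n) : ∑ tt, Pinf m n st tt ≤ 1 := by
  obtain ⟨⟨A, u, v⟩, h⟩ := st
  have hA : A ⊆ honeyEdges m n := h.1
  have h' : IsWormState m n A u v := h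
  by_cases huv : u = v
  · subst huv
    simp only [Pinf, if_true, Finset.sum_add_distrib]
    have ha := sum_ite_le (fun tt : WormState m n => tt = ⟨(A, u, u), h⟩) ({()} : Finset Unit)
      (fun _ => (A, u, u)) (by rintro tt rfl; exact ⟨(), by simp, rfl⟩)
      (c := (bdeg m n A u : ℝ) / 3) (by positivity)
    simp only [Finset.card_singleton, Nat.cast_one, one_mul] at ha
    have hb := sum_ite_le (fun tt : WormState m n => ∃ v' : Vtx m n, HoneyAdj m n u v' ∧
        s(u, v') ∉ A ∧ tt.1.1 = insert s(u, v') A ∧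
        ((tt.1.2.1 = v' ∧ tt.1.2.2 = u) ∨ (tt.1.2.1 = u ∧ tt.1.2.2 = v')))
      (((Nb u).filter fun z => s(u, z) ∉ A) ×ˢ (Finset.univ : Finset Bool))
      (fun p => (insert s(u, p.1) A, if p.2 then (p.1, u) else (u, p.1))) (by
        rintro ⟨⟨B, x, y⟩, hB⟩ ⟨w, h1, h2, h3, h4⟩
        simp only at h3 h4
        subst h3
        rcases h4 with ⟨rfl, rfl⟩ | ⟨rfl, rfl⟩
        · exact ⟨(x, true), by simp [mem_Nb, h1, h2], by simp⟩
        · exact ⟨(y, false), by simp [mem_Nb, h1, h2], by simp⟩) (c := 1 / 6) (by norm_num)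
    have hs := bdeg_add hg hA u
    have hs' : (bdeg m n A u : ℝ) + (((Nb u).filter fun z => s(u, z) ∉ A).card : ℝ) = 3 := by
      exact_mod_cast hs
    rw [Finset.card_product] at hb
    simp only [Finset.card_univ, Fintype.card_bool, Nat.cast_mul, Nat.cast_ofNat] at hb
    refine le_trans (add_le_add (le_of_eq_of_le (Finset.sum_congr rfl fun x _ => by congr) ha) hb) ?_
    linarith
  · simp only [Pinf, huv, if_false, Finset.sum_add_distrib]
    have half : ∀ (x : Vtx m n), (x = u ∨ x = v) → ∀ g : Finset (Sym2 (Vtx m n)) → Vtx m n → Cfg m n,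
      ∀ C1 C2 : Vtx m n → WormState m n → Prop,
      (∀ w tt, C1 w tt → g (A.erase s(x, w)) w = tt.1) →
      (∀ w tt, C2 w tt → g (insert s(x, w) A) w = tt.1) →
      ∑ tt, (if bdeg m n A x = 3 ∧ ∃ w, HoneyAdj m n x w ∧ s(x, w) ∈ A ∧ C1 w tt
        then (1 / 6 : ℝ) else 0) +
      ∑ tt, (if bdeg m n A x = 1 ∧ ∃ w, HoneyAdj m n x w ∧ s(x, w) ∉ A ∧ C2 w tt
        then (1 / 4 : ℝ) else 0) ≤ 1 / 2 := by
      intro x hx g C1 C2 h1 h2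
      have hs := bdeg_add hg hA x
      rcases bdeg_odd hg h' (x := x) ⟨hx, huv⟩ with hd | hd
      · have hb := sum_ite_le (fun tt : WormState m n => bdeg m n A x = 1 ∧ ∃ w, HoneyAdj m n x w ∧ s(x, w) ∉ A ∧ C2 w tt)
          ((Nb x).filter fun z => s(x, z) ∉ A) (fun w => g (insert s(x, w) A) w) (by
          rintro tt ⟨_, w, a1, a2, a3⟩
          exact ⟨w, by simp [mem_Nb, a1, a2], h2 w tt a3⟩) (c := 1 / 4) (by norm_num)
        have hz : ∑ tt : WormState m n, (if bdeg m n A x = 3 ∧ ∃ w, HoneyAdj m n x w ∧ s(x, w) ∈ A ∧ C1 w tt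
          then (1 / 6 : ℝ) else 0) = 0 := by
          apply Finset.sum_eq_zero
          intro tt _
          rw [if_neg]
          rintro ⟨a, _⟩; omega
        rw [hz, zero_add]
        have : ((Nb x).filter fun z => s(x, z) ∉ A).card = 2 := by omega
        rw [this] at hb
        refine le_trans hb (by norm_num)
      · have hb := sum_ite_le (fun tt : WormState m n => bdeg m n A x = 3 ∧ ∃ w, HoneyAdj m n x w ∧ s(x, w) ∈ A ∧ C1 w tt)
          ((Nb x).filter fun z => s(x, z) ∈ A) (fun w => g (A.erase s(x, w)) w) (by
          rintro tt ⟨_, w, a1, a2, a3⟩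
          exact ⟨w, by simp [mem_Nb, a1, a2], h1 w tt a3⟩) (c := 1 / 6) (by norm_num)
        have hz : ∑ tt : WormState m n, (if bdeg m n A x = 1 ∧ ∃ w, HoneyAdj m n x w ∧ s(x, w) ∉ A ∧ C2 w tt
          then (1 / 4 : ℝ) else 0) = 0 := by
          apply Finset.sum_eq_zero
          intro tt _
          rw [if_neg]
          rintro ⟨a, _⟩; omega
        rw [hz, add_zero]
        rw [bdeg_eq hA] at hd
        rw [hd] at hb
        refine le_trans hb (by norm_num)
    have b1 := half u (Or.inl rfl) (fun B w => (B, w, v))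
      (fun w tt => tt.1.1 = A.erase s(u, w) ∧ tt.1.2.1 = w ∧ tt.1.2.2 = v)
      (fun w tt => tt.1.1 = insert s(u, w) A ∧ tt.1.2.1 = w ∧ tt.1.2.2 = v)
      (fun w tt ⟨h1, h2, h3⟩ => (Prod.ext h1 (Prod.ext h2 h3)).symm)
      (fun w tt ⟨h1, h2, h3⟩ => (Prod.ext h1 (Prod.ext h2 h3)).symm)
    have b2 := half v (Or.inr rfl) (fun B w => (B, u, w))
      (fun w tt => tt.1.1 = A.erase s(v, w) ∧ tt.1.2.1 = u ∧ tt.1.2.2 = w)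
      (fun w tt => tt.1.1 = insert s(v, w) A ∧ tt.1.2.1 = u ∧ tt.1.2.2 = w)
      (fun w tt ⟨h1, h2, h3⟩ => (Prod.ext h1 (Prod.ext h2 h3)).symm)
      (fun w tt ⟨h1, h2, h3⟩ => (Prod.ext h1 (Prod.ext h2 h3)).symm)
    have := add_le_add b1 b2
    norm_num at this ⊢
    linarith

lemma H_valid (hg : Good m n) : IsWormState m n (Hconfig m n) 0 0 := by
  refine ⟨H_sub, fun x => ?_⟩
  rw [bdeg_H hg]
  simp

/-- Excessive nonnegative vectors are invariant. -/
lemma invariant_of_le (hg : Good m n) (g : WormState m n → ℝ) (h0 : ∀ s, 0 ≤ g s)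
    (h : ∀ tt, g tt ≤ ∑ st, g st * Pinf m n st tt) : ∀ tt, ∑ st, g st * Pinf m n st tt = g tt := by
  have h1 : ∑ tt, ∑ st, g st * Pinf m n st tt ≤ ∑ tt, g tt := by
    rw [Finset.sum_comm]
    apply Finset.sum_le_sum
    intro st _
    rw [← Finset.mul_sum]
    exact mul_le_of_le_one_right (h0 st) (row_sum hg st)
  have h2 := le_antisymm (Finset.sum_le_sum fun tt _ => h tt) h1
  intro tt
  exact (((Finset.sum_eq_sum_iff_of_le (fun tt _ => h tt)).1 h2) tt (Finset.mem_univ _)).symm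

lemma zero_of_zero (hg : Good m n) (g : WormState m n → ℝ) (h0 : ∀ s, 0 ≤ g s)
    (h : ∀ tt, ∑ st, g st * Pinf m n st tt = g tt)
    (hz : g ⟨(Hconfig m n, 0, 0), H_valid hg⟩ = 0) : ∀ s, g s = 0 := by
  have key : ∀ p q : Cfg m n, Relation.ReflTransGen RStep p q → ∀ hp hq, g ⟨q, hq⟩ = 0 →
      g ⟨p, hp⟩ = 0 := by
    intro p q hpq
    induction hpq using Relation.ReflTransGen.head_induction_on with
    | refl => intro _ _ h; exact h
    | head h1 _ ih =>
      intro hp hq hq0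
      have hc := RStep_valid hg h1 hp
      have hc0 := ih hc hq hq0
      have hsum := h ⟨_, hc⟩
      rw [hc0] at hsum
      rw [Finset.sum_eq_zero_iff_of_nonneg (fun s _ => mul_nonneg (h0 s) (P_nonneg s _))] at hsum
      have := hsum ⟨_, hp⟩ (Finset.mem_univ _)
      rcases mul_eq_zero.1 this with h2 | h2
      · exact h2
      · exact absurd h2 (RStep_pos h1 hp hc).ne'
  rintro ⟨⟨A, u, v⟩, hp⟩
  exact key _ _ (reach_all hg _ A u v rfl hp) hp _ hz

lemma unique_stat (hg : Good m n) (μ ν : WormState m n → ℝ)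
    (h1 : ∑ s, μ s = 1) (h2 : ∑ s, ν s = 1)
    (hμ : ∀ tt, ∑ st, μ st * Pinf m n st tt = μ tt)
    (hν : ∀ tt, ∑ st, ν st * Pinf m n st tt = ν tt) : ν = μ := by
  set f : WormState m n → ℝ := fun s => ν s - μ s with hf
  have fs : ∑ s, f s = 0 := by simp [hf, Finset.sum_sub_distrib, h1, h2]
  have fP : ∀ tt, ∑ st, f st * Pinf m n st tt = f tt := by
    intro tt
    simp only [hf, sub_mul, Finset.sum_sub_distrib, hμ, hν]
  have aP := invariant_of_le hg (fun s => |f s|) (fun s => abs_nonneg _) (by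
    intro tt
    rw [← fP tt]
    refine (Finset.abs_sum_le_sum_abs _ _).trans (le_of_eq ?_)
    apply Finset.sum_congr rfl
    intro s _
    rw [abs_mul, abs_of_nonneg (P_nonneg s tt)])
  have z0 : (|f ⟨(Hconfig m n, 0, 0), H_valid hg⟩| + f ⟨(Hconfig m n, 0, 0), H_valid hg⟩ = 0) ∨
      (|f ⟨(Hconfig m n, 0, 0), H_valid hg⟩| - f ⟨(Hconfig m n, 0, 0), H_valid hg⟩ = 0) := by
    rcases abs_cases (f ⟨(Hconfig m n, 0, 0), H_valid hg⟩) with ⟨h, _⟩ | ⟨h, _⟩ <;> rw [h] <;> simp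
  have all0 : ∀ s, f s = 0 := by
    rcases z0 with z | z
    · have := zero_of_zero hg (fun s => |f s| + f s)
        (fun s => by have := neg_abs_le (f s); linarith)
        (fun tt => by simp only [add_mul, Finset.sum_add_distrib, aP, fP]) z
      have hle : ∀ s ∈ Finset.univ, f s ≤ 0 := fun s _ => by
        have h1 := this s; have h2 := abs_nonneg (f s); linarith
      intro s
      exact (Finset.sum_eq_zero_iff_of_nonpos hle).1 fs s (Finset.mem_univ _)
    · have := zero_of_zero hg (fun s => |f s| - f s)
        (fun s => by have := le_abs_self (f s); linarith)
        (fun tt => by simp only [sub_mul, Finset.sum_sub_distrib, aP, fP]) z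
      have hle : ∀ s ∈ Finset.univ, 0 ≤ f s := fun s _ => by
        have h1 := this s; have h2 := abs_nonneg (f s); linarith
      intro s
      exact (Finset.sum_eq_zero_iff_of_nonneg hle).1 fs s (Finset.mem_univ _)
  funext s
  have := all0 s
  simp only [hf] at this
  linarith
/-- Swap the two defects. -/
def sw (st : WormState m n) : WormState m n :=
  ⟨(st.1.1, st.1.2.2, st.1.2.1), valid_swap st.2⟩

lemma sw_sw (st : WormState m n) : sw (sw st) = st := rfl

lemma P_sw (st tt : WormState m n) : Pinf m n (sw st) (sw tt) = Pinf m n st tt := by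
  obtain ⟨⟨A, u, v⟩, h⟩ := st
  obtain ⟨⟨B, x, y⟩, h'⟩ := tt
  unfold Pinf sw
  simp only
  by_cases huv : u = v
  · subst huv
    rw [if_pos rfl, if_pos rfl]
    refine congrArg₂ _ (if_congr ?_ rfl rfl) (if_congr ?_ rfl rfl)
    · simp only [Subtype.mk.injEq, Prod.mk.injEq]
      exact and_congr_right fun _ => and_comm
    · refine exists_congr fun _ => and_congr_right fun _ => and_congr_right fun _ =>
        and_congr_right fun _ => ?_
      rw [or_comm, and_comm, @and_comm (x = u)]
  · rw [if_neg huv, if_neg (Ne.symm huv)]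
    rw [add_assoc (_ + _), add_comm (_ + _), ← add_assoc]
    refine congrArg₂ _ (congrArg₂ _ (congrArg₂ _ ?_ ?_) ?_) ?_ <;>
      exact if_congr (and_congr_right fun _ => exists_congr fun _ => and_congr_right fun _ =>
        and_congr_right fun _ => and_congr_right fun _ => and_comm) rfl rfl

lemma adj_comm' {x y : Vtx m n} : HoneyAdj m n x y ↔ HoneyAdj m n y x := ⟨adj_symm, adj_symm⟩

lemma pi_sw (lam : ℝ) (st : WormState m n) : piInf m n lam (sw st) = piInf m n lam st := by
  obtain ⟨⟨A, u, v⟩, h⟩ := st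
  unfold piInf sw
  simp only
  have hs : s(v, u) = s(u, v) := Sym2.eq_swap
  refine if_congr Iff.rfl rfl (if_congr eq_comm rfl (if_congr adj_comm' ?_ ?_))
  · rw [hs]
    refine if_congr and_comm rfl (if_congr (and_congr_right fun _ => and_comm) rfl
      (if_congr (and_congr_right fun _ => and_comm) rfl rfl))
  · rw [add_comm]

lemma pi_nonneg {lam : ℝ} (hl : 0 ≤ lam) (st : WormState m n) : 0 ≤ piInf m n lam st := by
  unfold piInf
  split_ifs <;> positivity

lemma pi_closed (lam : ℝ) {A : Finset (Sym2 (Vtx m n))} {v : Vtx m n} (h : IsWormState m n A v v)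
    (hf : ∀ x, bdeg m n A x ≠ 0) : piInf m n lam ⟨(A, v, v), h⟩ = lam := by
  have hF : FullSupport m n ⟨(A, v, v), h⟩ := hf
  unfold piInf
  rw [if_neg (not_not.2 hF)]
  exact if_pos rfl

lemma pi_non (lam : ℝ) {A : Finset (Sym2 (Vtx m n))} {u v : Vtx m n} (h : IsWormState m n A u v)
    (hf : ∀ x, bdeg m n A x ≠ 0) (huv : u ≠ v) (ha : ¬ HoneyAdj m n u v) :
    piInf m n lam ⟨(A, u, v), h⟩ =
      if bdeg m n A u + bdeg m n A v = 2 then 2 * lam / 9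
      else if bdeg m n A u + bdeg m n A v = 4 then lam / 3
      else if bdeg m n A u + bdeg m n A v = 6 then lam / 2 else 0 := by
  have hF : FullSupport m n ⟨(A, u, v), h⟩ := hf
  unfold piInf
  rw [if_neg (not_not.2 hF)]
  simp only
  rw [if_neg huv, if_neg ha]

lemma pi_adj (lam : ℝ) {A : Finset (Sym2 (Vtx m n))} {u v : Vtx m n} (h : IsWormState m n A u v)
    (hf : ∀ x, bdeg m n A x ≠ 0) (huv : u ≠ v) (ha : HoneyAdj m n u v) :
    piInf m n lam ⟨(A, u, v), h⟩ =
      if bdeg m n A u = 3 ∧ bdeg m n A v = 3 then 2 * lam / 3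
      else if s(u, v) ∉ A ∧ bdeg m n A u = 1 ∧ bdeg m n A v = 1 then lam / 9
      else if s(u, v) ∈ A ∧ bdeg m n A u = 1 ∧ bdeg m n A v = 1 then 2 * lam / 9 else 0 := by
  have hF : FullSupport m n ⟨(A, u, v), h⟩ := hf
  unfold piInf
  rw [if_neg (not_not.2 hF)]
  simp only
  rw [if_neg huv, if_pos ha]

noncomputable def ext0 (F : WormState m n → ℝ) (p : Cfg m n) : ℝ :=
  if h : IsWormState m n p.1 p.2.1 p.2.2 then F ⟨p, h⟩ else 0

lemma ext0_nonneg {F : WormState m n → ℝ} (hF : ∀ s, 0 ≤ F s) (p : Cfg m n) : 0 ≤ ext0 F p := by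
  unfold ext0; split_ifs
  · exact hF _
  · exact le_rfl

lemma sum_ext0 {F : WormState m n → ℝ} (hF : ∀ s, 0 ≤ F s) (S : Finset (Cfg m n)) :
    ∑ p ∈ S, ext0 F p ≤ ∑ st, F st := by
  have h1 : ∑ st, F st = ∑ st : WormState m n, ext0 F st.1 := by
    apply Finset.sum_congr rfl
    intro st _
    unfold ext0
    rw [dif_pos st.2]
  rw [h1]
  have h2 : ∑ st : WormState m n, ext0 F st.1 =
      ∑ p ∈ (Finset.univ : Finset (WormState m n)).image Subtype.val, ext0 F p := by
    rw [Finset.sum_image (fun a _ b _ h => Subtype.val_injective h)]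
  rw [h2]
  have h3 : ∑ p ∈ S, ext0 F p = ∑ p ∈ S.filter (fun p => IsWormState m n p.1 p.2.1 p.2.2), ext0 F p := by
    rw [Finset.sum_filter]
    apply Finset.sum_congr rfl
    intro p _
    split_ifs with h
    · rfl
    · unfold ext0; rw [dif_neg h]
  rw [h3]
  apply Finset.sum_le_sum_of_subset_of_nonneg
  · intro p hp
    rw [Finset.mem_filter] at hp
    rw [Finset.mem_image]
    exact ⟨⟨p, hp.2⟩, Finset.mem_univ _, rfl⟩
  · intro p _ _; exact ext0_nonneg hF p

/-- Contribution to `tt` of the predecessor in which the first defect was at `z`. -/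
noncomputable def T1 (lam : ℝ) (tt : WormState m n) (z : Vtx m n) : ℝ :=
  ext0 (fun st => piInf m n lam st * Pinf m n st tt)
    (tog tt.1.1 s(tt.1.2.1, z), z, tt.1.2.2)

lemma T1_sw (lam : ℝ) (tt : WormState m n) (z : Vtx m n) :
    T1 lam (sw tt) z = ext0 (fun st => piInf m n lam st * Pinf m n st tt)
      (tog tt.1.1 s(tt.1.2.2, z), tt.1.2.1, z) := by
  unfold T1
  by_cases h : IsWormState m n (tog tt.1.1 s(tt.1.2.2, z)) tt.1.2.1 z
  · refine (dif_pos (valid_swap h)).trans (Eq.trans ?_ (dif_pos h).symm)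
    exact congrArg₂ (· * ·) (pi_sw lam ⟨(tog tt.1.1 s(tt.1.2.2, z), tt.1.2.1, z), h⟩)
      (P_sw ⟨(tog tt.1.1 s(tt.1.2.2, z), tt.1.2.1, z), h⟩ tt)
  · refine (dif_neg (fun hc => h (valid_swap hc))).trans ?_
    symm
    exact dif_neg h

lemma main_lb (hg : Good m n) {lam : ℝ} (hl : 0 ≤ lam) (tt : WormState m n) :
    ∑ z ∈ Nb tt.1.2.1, T1 lam tt z + ∑ z ∈ Nb tt.1.2.2, T1 lam (sw tt) z +
      piInf m n lam tt * Pinf m n tt tt ≤ ∑ st, piInf m n lam st * Pinf m n st tt := by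
  set F : WormState m n → ℝ := fun st => piInf m n lam st * Pinf m n st tt with hF
  have hF0 : ∀ s, 0 ≤ F s := fun s => mul_nonneg (pi_nonneg hl s) (P_nonneg s tt)
  set g1 : Vtx m n → Cfg m n := fun z => (tog tt.1.1 s(tt.1.2.1, z), z, tt.1.2.2) with hg1
  set g2 : Vtx m n → Cfg m n := fun z => (tog tt.1.1 s(tt.1.2.2, z), tt.1.2.1, z) with hg2
  have i1 : Function.Injective g1 := fun a b h => (Prod.ext_iff.1 (Prod.ext_iff.1 h).2).1
  have i2 : Function.Injective g2 := fun a b h => (Prod.ext_iff.1 (Prod.ext_iff.1 h).2).2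
  have d1 : Disjoint ((Nb tt.1.2.1).image g1) ((Nb tt.1.2.2).image g2) := by
    rw [Finset.disjoint_left]
    intro p h1 h2
    rw [Finset.mem_image] at h1 h2
    obtain ⟨a, ha, rfl⟩ := h1
    obtain ⟨b, hb, h⟩ := h2
    have : tt.1.2.1 = a := (Prod.ext_iff.1 (Prod.ext_iff.1 h).2).1
    exact adj_ne hg (mem_Nb.1 ha) this
  have d2 : Disjoint ((Nb tt.1.2.1).image g1 ∪ (Nb tt.1.2.2).image g2) {tt.1} := by
    rw [Finset.disjoint_singleton_right, Finset.mem_union, Finset.mem_image, Finset.mem_image]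
    rintro (⟨a, ha, h⟩ | ⟨a, ha, h⟩)
    · have : a = tt.1.2.1 := (Prod.ext_iff.1 (Prod.ext_iff.1 h).2).1
      exact adj_ne hg (mem_Nb.1 ha) this.symm
    · have : a = tt.1.2.2 := (Prod.ext_iff.1 (Prod.ext_iff.1 h).2).2
      exact adj_ne hg (mem_Nb.1 ha) this.symm
  have := sum_ext0 hF0 (((Nb tt.1.2.1).image g1 ∪ (Nb tt.1.2.2).image g2) ∪ {tt.1})
  rw [Finset.sum_union d2, Finset.sum_union d1, Finset.sum_image (fun a _ b _ h => i1 h),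
    Finset.sum_image (fun a _ b _ h => i2 h), Finset.sum_singleton] at this
  refine le_trans (le_of_eq ?_) this
  refine congrArg₂ _ (congrArg₂ _ rfl ?_) ?_
  · apply Finset.sum_congr rfl
    intro z _
    rw [T1_sw]
  · unfold ext0
    rw [dif_pos tt.2]

lemma T1_nonneg {lam : ℝ} (hl : 0 ≤ lam) (tt : WormState m n) (z : Vtx m n) : 0 ≤ T1 lam tt z :=
  ext0_nonneg (fun s => mul_nonneg (pi_nonneg hl s) (P_nonneg s tt)) _

lemma T1_ge {lam a b c : ℝ} (hl : 0 ≤ lam) (tt : WormState m n) (z : Vtx m n)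
    (B : Finset (Sym2 (Vtx m n))) (hB : tog tt.1.1 s(tt.1.2.1, z) = B)
    (h : IsWormState m n B z tt.1.2.2)
    (h1 : piInf m n lam ⟨(B, z, tt.1.2.2), h⟩ = a)
    (h2 : b ≤ Pinf m n ⟨(B, z, tt.1.2.2), h⟩ tt) (hc : a * b = c) : c ≤ T1 lam tt z := by
  subst hB
  unfold T1 ext0
  rw [dif_pos h, ← hc, ← h1]
  exact mul_le_mul_of_nonneg_left h2 (pi_nonneg hl _)

/-- Inserting at a degree one defect. -/
lemma T1_ins (hg : Good m n) {lam a c : ℝ} (hl : 0 ≤ lam) {A : Finset (Sym2 (Vtx m n))}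
    {x y z : Vtx m n} (h : IsWormState m n A x y) (hxy : x ≠ y) (hf : ∀ x, bdeg m n A x ≠ 0)
    (hz : HoneyAdj m n x z) (hzy : z ≠ y) (hA : s(x, z) ∉ A) (hc : a / 6 = c)
    (hpi : ∀ (B : Finset (Sym2 (Vtx m n))) (hB : IsWormState m n B z y), (∀ x, bdeg m n B x ≠ 0) →
      bdeg m n B z = 3 → bdeg m n B y = bdeg m n A y →
      piInf m n lam ⟨(B, z, y), hB⟩ = a) :
    c ≤ T1 lam ⟨(A, x, y), h⟩ z := by
  have hxz := adj_ne hg hz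
  have dz : bdeg m n A z = 2 := bdeg_two hg h (hf z) (by have := hxz.symm; tauto)
  have hv := tog_valid hg h hz
  rw [tog_of_notMem hA] at hv
  have dB := bdeg_insert hA
  have dzB : bdeg m n (insert s(x, z) A) z = 3 := by rw [dB]; simp [dz]
  refine T1_ge hl ⟨(A, x, y), h⟩ z (insert s(x, z) A) (tog_of_notMem hA) hv
    (hpi _ hv (fun w => by rw [dB]; have := hf w; omega) dzB (by rw [dB]; simp [hxy.symm, hzy.symm]))
    (P_e1 (w := x) hzy dzB (adj_symm hz) (by simp [Sym2.eq_swap]) ?_) (by rw [← hc]; ring)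
  simp only [Prod.mk.injEq, and_true]
  rw [show s(z, x) = s(x, z) from Sym2.eq_swap, Finset.erase_insert hA]

/-- Erasing at a degree three defect. -/
lemma T1_del (hg : Good m n) {lam a c : ℝ} (hl : 0 ≤ lam) {A : Finset (Sym2 (Vtx m n))}
    {x y z : Vtx m n} (h : IsWormState m n A x y) (hxy : x ≠ y) (hf : ∀ x, bdeg m n A x ≠ 0)
    (hz : HoneyAdj m n x z) (hzy : z ≠ y) (hd : bdeg m n A x = 3) (hc : a / 4 = c)
    (hpi : ∀ (B : Finset (Sym2 (Vtx m n))) (hB : IsWormState m n B z y), (∀ x, bdeg m n B x ≠ 0) →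
      bdeg m n B z = 1 → bdeg m n B y = bdeg m n A y → (s(z, y) ∈ B ↔ s(z, y) ∈ A) →
      piInf m n lam ⟨(B, z, y), hB⟩ = a) :
    c ≤ T1 lam ⟨(A, x, y), h⟩ z := by
  have hxz := adj_ne hg hz
  have hA := edge_of_three hg h.1 hd hz
  have dz : bdeg m n A z = 2 := bdeg_two hg h (hf z) (by have := hxz.symm; tauto)
  have hv := tog_valid hg h hz
  rw [tog_of_mem hA] at hv
  have dB := bdeg_erase hA
  have dzB : bdeg m n (A.erase s(x, z)) z = 1 := by have := dB z; simp at this; omega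
  refine T1_ge hl ⟨(A, x, y), h⟩ z (A.erase s(x, z)) (tog_of_mem hA) hv
    (hpi _ hv (fun w => ?_) dzB (by have := dB y; simp [hxy.symm, hzy.symm] at this; omega) ?_)
    (P_i1 (w := x) hzy dzB (adj_symm hz) (by simp [Sym2.eq_swap]) ?_) (by rw [← hc]; ring)
  · have h1 := dB w
    have h2 := hf w
    by_cases hw : w = x
    · subst hw; simp at h1; omega
    · by_cases hw' : w = z
      · subst hw'; omega
      · simp [hw, hw'] at h1; omega
  · rw [Finset.mem_erase, Ne, Sym2.eq_iff]
    have := hxz.symm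
    have := hxy.symm
    tauto
  · simp only [Prod.mk.injEq, and_true]
    rw [show s(z, x) = s(x, z) from Sym2.eq_swap, Finset.insert_erase hA]

lemma sg_not_adj (hg : Good m n) {x y : Vtx m n} (h : sg x = sg y) : ¬ HoneyAdj m n x y := by
  intro hc
  have := sg_adj hg hc
  rcases sg_cases x with h1 | h1 <;> rw [h1] at this h <;> omega

lemma la (hg : Good m n) {lam : ℝ} (hl : 0 ≤ lam) {A : Finset (Sym2 (Vtx m n))}
    {x y z : Vtx m n} (h : IsWormState m n A x y) (hxy : x ≠ y) (hf : ∀ x, bdeg m n A x ≠ 0)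
    (hz : HoneyAdj m n x z) (hzy : z ≠ y) (hs : sg x = - sg y) (hd : bdeg m n A x = 3)
    (hd' : bdeg m n A y = 3) : lam / 12 ≤ T1 lam ⟨(A, x, y), h⟩ z := by
  refine T1_del hg (a := lam / 3) hl h hxy hf hz hzy hd (by ring) ?_
  intro B hB hBf h1 h2 _
  rw [pi_non lam hB hBf hzy (sg_not_adj hg (by rw [sg_adj hg hz, hs, neg_neg])), h1, h2, hd']
  norm_num

lemma lb (hg : Good m n) {lam : ℝ} (hl : 0 ≤ lam) {A : Finset (Sym2 (Vtx m n))}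
    {x y z : Vtx m n} (h : IsWormState m n A x y) (hxy : x ≠ y) (hf : ∀ x, bdeg m n A x ≠ 0)
    (hz : HoneyAdj m n x z) (hzy : z ≠ y) (hs : sg x = - sg y) (hA : s(x, z) ∉ A)
    (hd' : bdeg m n A y = 1) : lam / 18 ≤ T1 lam ⟨(A, x, y), h⟩ z := by
  refine T1_ins hg (a := lam / 3) hl h hxy hf hz hzy hA (by ring) ?_
  intro B hB hBf h1 h2
  rw [pi_non lam hB hBf hzy (sg_not_adj hg (by rw [sg_adj hg hz, hs, neg_neg])), h1, h2, hd']
  norm_num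

lemma lc (hg : Good m n) {lam : ℝ} (hl : 0 ≤ lam) {A : Finset (Sym2 (Vtx m n))}
    {x y : Vtx m n} (h : IsWormState m n A x y) (hf : ∀ x, bdeg m n A x ≠ 0)
    (hz : HoneyAdj m n x y) (hd : bdeg m n A x = 3)
    (hd' : bdeg m n A y = 3) : lam / 6 ≤ T1 lam ⟨(A, x, y), h⟩ y := by
  have hA := edge_of_three hg h.1 hd hz
  have hxy := adj_ne hg hz
  have hv := tog_valid hg h hz
  rw [tog_of_mem hA] at hv
  have dB := bdeg_erase hA
  refine T1_ge (a := lam) (b := 1 / 6) hl ⟨(A, x, y), h⟩ y (A.erase s(x, y)) (tog_of_mem hA) hv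
    (pi_closed lam hv ?_) (P_c (w := x) rfl (adj_symm hz) (by simp [Sym2.eq_swap]) (Or.inl ?_)) (by ring)
  · intro w
    have h1 := dB w
    have h2 := hf w
    by_cases hw : w = x
    · subst hw; simp at h1; omega
    · by_cases hw' : w = y
      · subst hw'; simp at h1; omega
      · simp [hw, hw'] at h1; omega
  · simp only [Prod.mk.injEq, and_true]
    rw [show s(y, x) = s(x, y) from Sym2.eq_swap, Finset.insert_erase hA]

lemma ld (hg : Good m n) {lam : ℝ} (hl : 0 ≤ lam) {A : Finset (Sym2 (Vtx m n))}
    {x y z : Vtx m n} (h : IsWormState m n A x y) (hxy : x ≠ y) (hf : ∀ x, bdeg m n A x ≠ 0)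
    (hz : HoneyAdj m n x z) (hs : sg x = sg y) (hA : s(x, z) ∉ A)
    (hd' : bdeg m n A y = 3) :
    (if z ∈ Nb y then lam / 9 else lam / 12) ≤ T1 lam ⟨(A, x, y), h⟩ z := by
  have hzy : z ≠ y := by rintro rfl; exact sg_not_adj hg hs hz
  simp only [mem_Nb]
  split_ifs with hyz
  · refine T1_ins hg (a := 2 * lam / 3) hl h hxy hf hz hzy hA (by ring) ?_
    intro B hB hBf h1 h2
    rw [pi_adj lam hB hBf hzy (adj_symm hyz), h1, h2, hd']
    norm_num
  · refine T1_ins hg (a := lam / 2) hl h hxy hf hz hzy hA (by ring) ?_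
    intro B hB hBf h1 h2
    rw [pi_non lam hB hBf hzy (fun hc => hyz (adj_symm hc)), h1, h2, hd']
    norm_num

lemma lee (hg : Good m n) {lam : ℝ} (hl : 0 ≤ lam) {A : Finset (Sym2 (Vtx m n))}
    {x y z : Vtx m n} (h : IsWormState m n A x y) (hxy : x ≠ y) (hf : ∀ x, bdeg m n A x ≠ 0)
    (hz : HoneyAdj m n x z) (hs : sg x = sg y) (hd : bdeg m n A x = 3)
    (hd' : bdeg m n A y = 1) :
    (if z ∈ Nb y ∧ s(y, z) ∉ A then lam / 36 else lam / 18) ≤ T1 lam ⟨(A, x, y), h⟩ z := by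
  have hzy : z ≠ y := by rintro rfl; exact sg_not_adj hg hs hz
  have e : s(y, z) = s(z, y) := Sym2.eq_swap
  simp only [mem_Nb, e]
  by_cases hyz : HoneyAdj m n y z
  · by_cases he : s(z, y) ∈ A
    · rw [if_neg (by tauto)]
      refine T1_del hg (a := 2 * lam / 9) hl h hxy hf hz hzy hd (by ring) ?_
      intro B hB hBf h1 h2 h3
      rw [pi_adj lam hB hBf hzy (adj_symm hyz), h1, h2, hd']
      norm_num [he, h3]
    · rw [if_pos ⟨hyz, he⟩]
      refine T1_del hg (a := lam / 9) hl h hxy hf hz hzy hd (by ring) ?_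
      intro B hB hBf h1 h2 h3
      rw [pi_adj lam hB hBf hzy (adj_symm hyz), h1, h2, hd']
      norm_num [he, h3]
  · rw [if_neg (by tauto)]
    refine T1_del hg (a := 2 * lam / 9) hl h hxy hf hz hzy hd (by ring) ?_
    intro B hB hBf h1 h2 h3
    rw [pi_non lam hB hBf hzy (fun hc => hyz (adj_symm hc)), h1, h2, hd']
    norm_num

lemma lf (hg : Good m n) {lam : ℝ} (hl : 0 ≤ lam) {A : Finset (Sym2 (Vtx m n))}
    {v z : Vtx m n} (h : IsWormState m n A v v) (hf : ∀ x, bdeg m n A x ≠ 0)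
    (hz : HoneyAdj m n v z) :
    (if s(v, z) ∈ A then lam / 36 else lam / 9) ≤ T1 lam ⟨(A, v, v), h⟩ z := by
  have hvz := adj_ne hg hz
  have d2 : ∀ x, bdeg m n A x = 2 := fun x => bdeg_two hg h (hf x) (by simp)
  have hv := tog_valid hg h hz
  split_ifs with hA
  · rw [tog_of_mem hA] at hv
    have dB := bdeg_erase hA
    have dv : bdeg m n (A.erase s(v, z)) v = 1 := by have := dB v; simp [d2] at this; omega
    have dz : bdeg m n (A.erase s(v, z)) z = 1 := by have := dB z; simp [d2] at this; omega
    refine T1_ge (a := lam / 9) (b := 1 / 4) hl ⟨(A, v, v), h⟩ z (A.erase s(v, z)) (tog_of_mem hA) hv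
      ?_ (P_i1 (w := v) hvz.symm dz (adj_symm hz) (by simp [Sym2.eq_swap]) ?_) (by ring)
    · rw [pi_adj lam hv _ hvz.symm (adj_symm hz), dv, dz]
      · rw [if_neg (by norm_num), if_pos]
        simp [Sym2.eq_swap]
      · intro w
        have h1 := dB w
        rw [d2] at h1
        split_ifs at h1 <;> omega
    · simp only [Prod.mk.injEq, and_true]
      rw [show s(z, v) = s(v, z) from Sym2.eq_swap, Finset.insert_erase hA]
  · rw [tog_of_notMem hA] at hv
    have dB := bdeg_insert hA
    have dv : bdeg m n (insert s(v, z) A) v = 3 := by rw [dB]; simp [d2]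
    have dz : bdeg m n (insert s(v, z) A) z = 3 := by rw [dB]; simp [d2]
    refine T1_ge (a := 2 * lam / 3) (b := 1 / 6) hl ⟨(A, v, v), h⟩ z (insert s(v, z) A)
      (tog_of_notMem hA) hv
      ?_ (P_e1 (w := v) hvz.symm dz (adj_symm hz) (by simp [Sym2.eq_swap]) ?_) (by ring)
    · rw [pi_adj lam hv _ hvz.symm (adj_symm hz), dv, dz]
      · rw [if_pos (by norm_num)]
      · intro w
        rw [dB, d2]; omega
    · simp only [Prod.mk.injEq, and_true]
      rw [show s(z, v) = s(v, z) from Sym2.eq_swap, Finset.erase_insert hA]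
lemma sum_Nb (hg : Good m n) {A : Finset (Sym2 (Vtx m n))} (hA : A ⊆ honeyEdges m n)
    (x : Vtx m n) (a b : ℝ) :
    ∑ z ∈ Nb x, (if s(x, z) ∉ A then a else b) = (3 - bdeg m n A x) * a + bdeg m n A x * b := by
  have h1 := bdeg_add hg hA x
  have h2 := Finset.card_filter_add_card_filter_not (s := Nb x) (fun z => s(x, z) ∉ A)
  rw [Nb_card hg] at h2
  rw [Finset.sum_ite, Finset.sum_const, Finset.sum_const, nsmul_eq_mul, nsmul_eq_mul]
  have h3 : ((Nb x).filter (fun z => s(x, z) ∉ A)).card = 3 - bdeg m n A x := by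
    have : ((Nb x).filter (fun z => s(x, z) ∉ A)).card + bdeg m n A x = 3 := by
      rw [add_comm]; convert h1
    omega
  have h4 : ((Nb x).filter (fun z => ¬ s(x, z) ∉ A)).card = bdeg m n A x := by omega
  have h5 : bdeg m n A x ≤ 3 := by omega
  rw [h3, h4, Nat.cast_sub h5]
  norm_num

lemma sum_eqv {x y : Vtx m n} (h : HoneyAdj m n x y) (a : ℝ) :
    ∑ z ∈ Nb x, (if z = y then a else 0) = a := by
  rw [Finset.sum_ite_eq', if_pos (mem_Nb.2 h)]

lemma sum_cst (hg : Good m n) (x : Vtx m n) (a : ℝ) : ∑ _z ∈ Nb x, a = 3 * a := by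
  rw [Finset.sum_const, Nb_card hg, nsmul_eq_mul]; norm_num

lemma side_closed (hg : Good m n) {lam : ℝ} (hl : 0 ≤ lam) {A : Finset (Sym2 (Vtx m n))}
    {v : Vtx m n} (h : IsWormState m n A v v) (hf : ∀ x, bdeg m n A x ≠ 0) :
    lam / 6 ≤ ∑ z ∈ Nb v, T1 lam ⟨(A, v, v), h⟩ z := by
  have d2 : bdeg m n A v = 2 := bdeg_two hg h (hf v) (by simp)
  have h1 := sum_Nb hg h.1 v (lam / 9) (lam / 36)
  have h2 : ∑ z ∈ Nb v, (if s(v, z) ∉ A then lam / 9 else lam / 36) ≤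
      ∑ z ∈ Nb v, T1 lam ⟨(A, v, v), h⟩ z := by
    apply Finset.sum_le_sum
    intro z hz
    have := lf hg hl h hf (mem_Nb.1 hz)
    simp only [ite_not]
    exact this
  rw [h1, d2] at h2
  push_cast at h2
  linarith

lemma side_opp3 (hg : Good m n) {lam : ℝ} (hl : 0 ≤ lam) {A : Finset (Sym2 (Vtx m n))}
    {x y : Vtx m n} (h : IsWormState m n A x y) (hxy : x ≠ y) (hf : ∀ x, bdeg m n A x ≠ 0)
    (ha : ¬ HoneyAdj m n x y) (hs : sg x = - sg y) (hd : bdeg m n A x = 3)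
    (hd' : bdeg m n A y = 3) : lam / 4 ≤ ∑ z ∈ Nb x, T1 lam ⟨(A, x, y), h⟩ z := by
  have h2 : ∑ z ∈ Nb x, lam / 12 ≤ ∑ z ∈ Nb x, T1 lam ⟨(A, x, y), h⟩ z := by
    apply Finset.sum_le_sum
    intro z hz
    exact la hg hl h hxy hf (mem_Nb.1 hz) (by rintro rfl; exact ha (mem_Nb.1 hz)) hs hd hd'
  rw [sum_cst hg] at h2
  linarith

lemma side_opp1 (hg : Good m n) {lam : ℝ} (hl : 0 ≤ lam) {A : Finset (Sym2 (Vtx m n))}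
    {x y : Vtx m n} (h : IsWormState m n A x y) (hxy : x ≠ y) (hf : ∀ x, bdeg m n A x ≠ 0)
    (ha : HoneyAdj m n x y → s(x, y) ∈ A) (hs : sg x = - sg y) (hd : bdeg m n A x = 1)
    (hd' : bdeg m n A y = 1) : lam / 9 ≤ ∑ z ∈ Nb x, T1 lam ⟨(A, x, y), h⟩ z := by
  have h2 : ∑ z ∈ Nb x, (if s(x, z) ∉ A then lam / 18 else 0) ≤
      ∑ z ∈ Nb x, T1 lam ⟨(A, x, y), h⟩ z := by
    apply Finset.sum_le_sum
    intro z hz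
    by_cases hA : s(x, z) ∉ A
    · rw [if_pos hA]
      exact lb hg hl h hxy hf (mem_Nb.1 hz) (by rintro rfl; exact hA (ha (mem_Nb.1 hz))) hs hA hd'
    · rw [if_neg hA]
      exact T1_nonneg hl _ _
  rw [sum_Nb hg h.1, hd] at h2
  push_cast at h2
  linarith

lemma side_adj3 (hg : Good m n) {lam : ℝ} (hl : 0 ≤ lam) {A : Finset (Sym2 (Vtx m n))}
    {x y : Vtx m n} (h : IsWormState m n A x y) (hxy : x ≠ y) (hf : ∀ x, bdeg m n A x ≠ 0)
    (ha : HoneyAdj m n x y) (hs : sg x = - sg y) (hd : bdeg m n A x = 3)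
    (hd' : bdeg m n A y = 3) : lam / 3 ≤ ∑ z ∈ Nb x, T1 lam ⟨(A, x, y), h⟩ z := by
  have h2 : ∑ z ∈ Nb x, (lam / 12 + if z = y then lam / 12 else 0) ≤
      ∑ z ∈ Nb x, T1 lam ⟨(A, x, y), h⟩ z := by
    apply Finset.sum_le_sum
    intro z hz
    split_ifs with hzy
    · subst hzy
      have := lc hg hl h hf ha hd hd'
      linarith
    · have := la hg hl h hxy hf (mem_Nb.1 hz) hzy hs hd hd'
      linarith
  rw [Finset.sum_add_distrib, sum_cst hg, sum_eqv ha] at h2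
  linarith

lemma side_adj1 (hg : Good m n) {lam : ℝ} (hl : 0 ≤ lam) {A : Finset (Sym2 (Vtx m n))}
    {x y : Vtx m n} (h : IsWormState m n A x y) (hxy : x ≠ y) (hf : ∀ x, bdeg m n A x ≠ 0)
    (ha : HoneyAdj m n x y) (he : s(x, y) ∉ A) (hs : sg x = - sg y) (hd : bdeg m n A x = 1)
    (hd' : bdeg m n A y = 1) : lam / 18 ≤ ∑ z ∈ Nb x, T1 lam ⟨(A, x, y), h⟩ z := by
  have h2 : ∑ z ∈ Nb x, ((if s(x, z) ∉ A then lam / 18 else 0) - if z = y then lam / 18 else 0) ≤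
      ∑ z ∈ Nb x, T1 lam ⟨(A, x, y), h⟩ z := by
    apply Finset.sum_le_sum
    intro z hz
    by_cases hzy : z = y
    · subst hzy
      rw [if_pos he, if_pos rfl, sub_self]
      exact T1_nonneg hl _ _
    · rw [if_neg hzy, sub_zero]
      by_cases hA : s(x, z) ∉ A
      · rw [if_pos hA]
        exact lb hg hl h hxy hf (mem_Nb.1 hz) hzy hs hA hd'
      · rw [if_neg hA]
        exact T1_nonneg hl _ _
  rw [Finset.sum_sub_distrib, sum_Nb hg h.1, sum_eqv ha, hd] at h2
  push_cast at h2
  linarith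

lemma same_sum (hg : Good m n) {lam : ℝ} (hl : 0 ≤ lam) {A : Finset (Sym2 (Vtx m n))}
    {x y : Vtx m n} (h : IsWormState m n A x y) (h' : IsWormState m n A y x) (hxy : x ≠ y)
    (hf : ∀ x, bdeg m n A x ≠ 0) (hs : sg x = sg y) (hd : bdeg m n A x = 1)
    (hd' : bdeg m n A y = 3) :
    lam / 3 ≤ ∑ z ∈ Nb x, T1 lam ⟨(A, x, y), h⟩ z + ∑ z ∈ Nb y, T1 lam ⟨(A, y, x), h'⟩ z := by
  have h1 : ∑ z ∈ Nb x, ((if s(x, z) ∉ A then lam / 12 else 0) +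
      if z ∈ Nb y ∧ s(x, z) ∉ A then lam / 36 else 0) ≤
      ∑ z ∈ Nb x, T1 lam ⟨(A, x, y), h⟩ z := by
    apply Finset.sum_le_sum
    intro z hz
    by_cases hA : s(x, z) ∉ A
    · have := ld hg hl h hxy hf (mem_Nb.1 hz) hs hA hd'
      refine le_trans (le_of_eq ?_) this
      by_cases hy : z ∈ Nb y
      · rw [if_pos hA, if_pos ⟨hy, hA⟩, if_pos hy]; ring
      · rw [if_pos hA, if_neg (fun hc => hy hc.1), if_neg hy]; ring
    · rw [if_neg hA, if_neg (fun hc => hA hc.2), add_zero]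
      exact T1_nonneg hl _ _
  have h2 : ∑ z ∈ Nb y, (lam / 18 - if z ∈ Nb x ∧ s(x, z) ∉ A then lam / 36 else 0) ≤
      ∑ z ∈ Nb y, T1 lam ⟨(A, y, x), h'⟩ z := by
    apply Finset.sum_le_sum
    intro z hz
    have := lee hg hl h' hxy.symm hf (mem_Nb.1 hz) hs.symm hd' hd
    refine le_trans (le_of_eq ?_) this
    split_ifs <;> ring
  have h3 : ∑ z ∈ Nb x, (if z ∈ Nb y ∧ s(x, z) ∉ A then lam / 36 else 0) =
      ∑ z ∈ Nb y, (if z ∈ Nb x ∧ s(x, z) ∉ A then lam / 36 else 0) := by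
    rw [← Finset.sum_filter, ← Finset.sum_filter]
    apply Finset.sum_congr _ (fun _ _ => rfl)
    ext z
    simp only [Finset.mem_filter]
    tauto
  rw [Finset.sum_add_distrib, sum_Nb hg h.1, hd, h3] at h1
  rw [Finset.sum_sub_distrib, sum_cst hg] at h2
  push_cast at h1
  linarith

lemma pi_le (hg : Good m n) {lam : ℝ} (hl : 0 ≤ lam) (tt : WormState m n) :
    piInf m n lam tt ≤ ∑ st, piInf m n lam st * Pinf m n st tt := by
  by_cases hF : FullSupport m n tt
  swap
  · have : piInf m n lam tt = 0 := by unfold piInf; rw [if_pos hF]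
    rw [this]
    exact Finset.sum_nonneg fun s _ => mul_nonneg (pi_nonneg hl s) (P_nonneg s tt)
  refine le_trans ?_ (main_lb hg hl tt)
  obtain ⟨⟨A, x, y⟩, h⟩ := tt
  have hf : ∀ x, bdeg m n A x ≠ 0 := hF
  have h' : IsWormState m n A y x := valid_swap h
  change piInf m n lam ⟨(A, x, y), h⟩ ≤ ∑ z ∈ Nb x, T1 lam ⟨(A, x, y), h⟩ z +
    ∑ z ∈ Nb y, T1 lam ⟨(A, y, x), h'⟩ z + _
  by_cases hxy : x = y
  · subst hxy
    rw [pi_closed lam h hf]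
    have d2 : bdeg m n A x = 2 := bdeg_two hg h (hf x) (by simp)
    have hp : (2 : ℝ) / 3 ≤ Pinf m n ⟨(A, x, x), h⟩ ⟨(A, x, x), h⟩ := by
      have := P_id (st := (⟨(A, x, x), h⟩ : WormState m n)) rfl
      simp only [d2] at this
      exact_mod_cast this
    have := side_closed hg hl h hf
    have h3 := mul_le_mul_of_nonneg_left hp hl
    linarith
  · have hself : 0 ≤ piInf m n lam ⟨(A, x, y), h⟩ * Pinf m n ⟨(A, x, y), h⟩ ⟨(A, x, y), h⟩ :=
      mul_nonneg (pi_nonneg hl _) (P_nonneg _ _)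
    refine le_trans ?_ (le_add_of_nonneg_right hself)
    have hyx : y ≠ x := Ne.symm hxy
    have dx : bdeg m n A x = 1 ∨ bdeg m n A x = 3 := bdeg_odd hg h (x := x) ⟨Or.inl rfl, hxy⟩
    by_cases hs : sg x = sg y
    · have ha := sg_not_adj hg hs
      have hsum : bdeg m n A x + bdeg m n A y = 4 := deg_same hg h hf hxy hs
      rw [pi_non lam h hf hxy ha, hsum]
      norm_num
      rcases dx with dx | dx
      · have dy : bdeg m n A y = 3 := by omega
        exact same_sum hg hl h h' hxy hf hs dx dy
      · rw [add_comm]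
        exact same_sum hg hl h' h hyx hf hs.symm (by omega) dx
    · have hs1 : sg x = - sg y := by
        rcases sg_cases x with h1 | h1 <;> rcases sg_cases y with h2 | h2 <;> rw [h1, h2] at hs ⊢ <;>
          simp_all
      have hs2 : sg y = - sg x := by rw [hs1, neg_neg]
      have hdd : bdeg m n A x = bdeg m n A y := deg_opp hg h hf hxy hs1
      by_cases ha : HoneyAdj m n x y
      · rw [pi_adj lam h hf hxy ha, ← hdd]
        rcases dx with dx | dx
        · have dy : bdeg m n A y = 1 := by omega
          by_cases he : s(x, y) ∈ A
          · have he' : s(y, x) ∈ A := by rwa [Sym2.eq_swap]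
            have e1 := side_opp1 hg hl h hxy hf (fun _ => he) hs1 dx dy
            have e2 := side_opp1 hg hl h' hyx hf (fun _ => he') hs2 dy dx
            rw [dx, if_neg (by norm_num), if_neg (by tauto), if_pos ⟨he, rfl, rfl⟩]
            linarith
          · have he' : s(y, x) ∉ A := by rwa [Sym2.eq_swap]
            have e1 := side_adj1 hg hl h hxy hf ha he hs1 dx dy
            have e2 := side_adj1 hg hl h' hyx hf (adj_symm ha) he' hs2 dy dx
            rw [dx, if_neg (by norm_num), if_pos ⟨he, rfl, rfl⟩]
            linarith
        · have dy : bdeg m n A y = 3 := by omega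
          have e1 := side_adj3 hg hl h hxy hf ha hs1 dx dy
          have e2 := side_adj3 hg hl h' hyx hf (adj_symm ha) hs2 dy dx
          rw [dx, if_pos ⟨rfl, rfl⟩]
          linarith
      · rw [pi_non lam h hf hxy ha, ← hdd]
        rcases dx with dx | dx
        · have dy : bdeg m n A y = 1 := by omega
          have e1 := side_opp1 hg hl h hxy hf (fun hc => absurd hc ha) hs1 dx dy
          have e2 := side_opp1 hg hl h' hyx hf (fun hc => absurd (adj_symm hc) ha) hs2 dy dx
          rw [dx]
          norm_num
          linarith
        · have dy : bdeg m n A y = 3 := by omega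
          have e1 := side_opp3 hg hl h hxy hf ha hs1 dx dy
          have e2 := side_opp3 hg hl h' hyx hf (fun hc => ha (adj_symm hc)) hs2 dy dx
          rw [dx]
          norm_num
          linarith

lemma pi_lin (lam : ℝ) (st : WormState m n) : piInf m n lam st = lam * piInf m n 1 st := by
  unfold piInf
  split_ifs <;> ring

lemma final (hg : Good m n) :
    ∃ lam : ℝ, 0 < lam ∧
      (∀ st : WormState m n, 0 ≤ piInf m n lam st) ∧
      (∑ st : WormState m n, piInf m n lam st = 1) ∧
      (∀ tt : WormState m n, ∑ st : WormState m n,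
          piInf m n lam st * Pinf m n st tt = piInf m n lam tt) ∧
      (∀ ν : WormState m n → ℝ, (∀ st, 0 ≤ ν st) → (∑ st : WormState m n, ν st = 1) →
        (∀ tt : WormState m n, ∑ st : WormState m n, ν st * Pinf m n st tt = ν tt) →
        ν = piInf m n lam) := by
  have hZ : 0 < ∑ st : WormState m n, piInf m n 1 st := by
    have h1 : piInf m n 1 ⟨(Hconfig m n, 0, 0), H_valid hg⟩ = 1 :=
      pi_closed 1 (H_valid hg) (fun x => by rw [bdeg_H hg]; norm_num)
    have h2 := Finset.single_le_sum (f := fun st : WormState m n => piInf m n 1 st)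
      (fun s _ => pi_nonneg zero_le_one s) (Finset.mem_univ ⟨(Hconfig m n, 0, 0), H_valid hg⟩)
    simp only [h1] at h2
    linarith
  set Z := ∑ st : WormState m n, piInf m n 1 st with hZd
  have hl : 0 < 1 / Z := by positivity
  have hs : ∑ st : WormState m n, piInf m n (1 / Z) st = 1 := by
    rw [Finset.sum_congr rfl (fun st _ => pi_lin (1 / Z) st), ← Finset.mul_sum, ← hZd]
    field_simp
  have hst := invariant_of_le hg (piInf m n (1 / Z)) (pi_nonneg hl.le) (pi_le hg hl.le)
  exact ⟨1 / Z, hl, pi_nonneg hl.le, hs, hst, fun ν _ h1 h2 => unique_stat hg _ ν hs h1 hst h2⟩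

end Helpers

theorem stationary_prop (m n : ℕ) [NeZero m] [NeZero n]
    (hm : Even m) (hn : Even n) (hm4 : 4 ≤ m) (hn4 : 4 ≤ n) :
    ∃ lam : ℝ, 0 < lam ∧
      (∀ st : WormState m n, 0 ≤ piInf m n lam st) ∧
      (∑ st : WormState m n, piInf m n lam st = 1) ∧
      (∀ tt : WormState m n, ∑ st : WormState m n,
          piInf m n lam st * Pinf m n st tt = piInf m n lam tt) ∧
      (∀ ν : WormState m n → ℝ, (∀ st, 0 ≤ ν st) → (∑ st : WormState m n, ν st = 1) →
        (∀ tt : WormState m n, ∑ st : WormState m n, ν st * Pinf m n st tt = ν tt) →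
        ν = piInf m n lam) := by
  exact final ⟨hm, hn, hm4, hn4⟩

end FPL
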